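/- arXiv:1507.02176 — 2 statements merged into one kernel-verified Lean document; each statement's English description precedes it below -/
import Mathlib

section
/- Under assumptions (H1)–(H3), given a bounded set B ⊆ ℝ^N × ℝ^M and S > 0, there exists a bounded set B0 ⊇ B such that for every (x,y) ∈ B and every ε > 0 one can find a control α and a trajectory (ξ,η) of (CD_ε) with (ξ(0),η(0)) = (x,y) satisfying (ξ(t), η(t)) ∈ B0 for all t ∈ [0, S/ε]. -/
open Set MeasureTheory Metric Filter
open scoped RealInnerProductSpace Topology

noncomputable section

/-- `ℝ^n` with the Euclidean structure. -/
abbrev Euc (n : ℕ) : Type := EuclideanSpace ℝ (Fin n)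

/-- A control: a measurable map with values in the control set `A`. -/
def IsControl {k : ℕ} (A : Set (Euc k)) (α : ℝ → Euc k) : Prop :=
  Measurable α ∧ ∀ t, α t ∈ A

/-- `(ξ, η)` is a trajectory of the controlled dynamics `(CD_ε)` for the control `α`:
this is the integral form, equivalent to `(ξ, η)` being locally absolutely continuous
with `ξ' = ε f(ξ, η, α)` and `η' = g(ξ, η, α)` a.e. on `[0, ∞)`. -/
def IsTrajectory {N M k : ℕ}
    (f : Euc N → Euc M → Euc k → Euc N) (g : Euc N → Euc M → Euc k → Euc M)
    (ε : ℝ) (α : ℝ → Euc k) (ξ : ℝ → Euc N) (η : ℝ → Euc M) : Prop :=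
  (∀ t, 0 ≤ t → IntervalIntegrable (fun s => f (ξ s) (η s) (α s)) volume 0 t) ∧
  (∀ t, 0 ≤ t → IntervalIntegrable (fun s => g (ξ s) (η s) (α s)) volume 0 t) ∧
  (∀ t, 0 ≤ t → ξ t = ξ 0 + ε • ∫ s in (0:ℝ)..t, f (ξ s) (η s) (α s)) ∧
  (∀ t, 0 ≤ t → η t = η 0 + ∫ s in (0:ℝ)..t, g (ξ s) (η s) (α s))

/-- The value function `V^ε(x, y, t)` of the singularly perturbed optimal control problem. -/
def valueFun {N M k : ℕ} (A : Set (Euc k))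
    (f : Euc N → Euc M → Euc k → Euc N) (g : Euc N → Euc M → Euc k → Euc M)
    (ℓ : Euc N → Euc M → Euc k → ℝ) (u0 : Euc N → Euc M → ℝ)
    (ε : ℝ) (x : Euc N) (y : Euc M) (t : ℝ) : ℝ :=
  sInf { v : ℝ | ∃ (α : ℝ → Euc k) (ξ : ℝ → Euc N) (η : ℝ → Euc M),
    IsControl A α ∧ IsTrajectory f g ε α ξ η ∧ ξ 0 = x ∧ η 0 = y ∧
    IntervalIntegrable (fun s => ℓ (ξ s) (η s) (α s)) volume 0 (t / ε) ∧
    v = ε * (∫ s in (0:ℝ)..(t / ε), ℓ (ξ s) (η s) (α s)) + u0 (ξ (t / ε)) (η (t / ε)) }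

/-- The Hamiltonian `H(x,y,p,q) = max_{a ∈ A} { -p·f(x,y,a) - q·g(x,y,a) - ℓ(x,y,a) }`. -/
def Ham {N M k : ℕ} (A : Set (Euc k))
    (f : Euc N → Euc M → Euc k → Euc N) (g : Euc N → Euc M → Euc k → Euc M)
    (ℓ : Euc N → Euc M → Euc k → ℝ)
    (x : Euc N) (y : Euc M) (p : Euc N) (q : Euc M) : ℝ :=
  sSup ((fun a => -⟪p, f x y a⟫ - ⟪q, g x y a⟫ - ℓ x y a) '' A)

/-- Viscosity subsolution of the stationary equation `G(y, Du) = b` on `Ω`. -/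
def IsVSubOn {m : ℕ} (G : Euc m → Euc m → ℝ) (b : ℝ) (Ω : Set (Euc m)) (u : Euc m → ℝ) : Prop :=
  UpperSemicontinuousOn u Ω ∧
  ∀ ψ : Euc m → ℝ, ContDiff ℝ 1 ψ → ∀ y ∈ Ω,
    IsLocalMaxOn (fun z => u z - ψ z) Ω y → G y (gradient ψ y) ≤ b

/-- Viscosity supersolution of the stationary equation `G(y, Du) = b` on `Ω`. -/
def IsVSupOn {m : ℕ} (G : Euc m → Euc m → ℝ) (b : ℝ) (Ω : Set (Euc m)) (u : Euc m → ℝ) : Prop :=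
  LowerSemicontinuousOn u Ω ∧
  ∀ ψ : Euc m → ℝ, ContDiff ℝ 1 ψ → ∀ y ∈ Ω,
    IsLocalMinOn (fun z => u z - ψ z) Ω y → b ≤ G y (gradient ψ y)

/-- The set of levels `b` for which `F(y, Du) = b` has a viscosity subsolution on `ℝ^m`. -/
def subsolLevels {m : ℕ} (F : Euc m → Euc m → ℝ) : Set ℝ :=
  { b : ℝ | ∃ u : Euc m → ℝ, IsVSubOn F b univ u }

/-- The critical value of a Hamiltonian `F` on `ℝ^m`. -/
def critVal {m : ℕ} (F : Euc m → Euc m → ℝ) : ℝ :=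
  sInf (subsolLevels F)

/-- The effective Hamiltonian `H̄(x, p)`. -/
def effH {N M k : ℕ} (A : Set (Euc k))
    (f : Euc N → Euc M → Euc k → Euc N) (g : Euc N → Euc M → Euc k → Euc M)
    (ℓ : Euc N → Euc M → Euc k → ℝ) (x : Euc N) (p : Euc N) : ℝ :=
  critVal (fun (y q : Euc M) => Ham A f g ℓ x y p q)

/-- The frozen Hamiltonian `H₀(y, q) = H(x₀, y, p₀, q)` of the cell problem. -/
def cellH {N M k : ℕ} (A : Set (Euc k))
    (f : Euc N → Euc M → Euc k → Euc N) (g : Euc N → Euc M → Euc k → Euc M)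
    (ℓ : Euc N → Euc M → Euc k → ℝ) (x0 p0 : Euc N) : Euc M → Euc M → ℝ :=
  fun y q => Ham A f g ℓ x0 y p0 q

/-- Viscosity subsolution of `u_t + G(x, D_x u) = 0` on `Ω ⊆ ℝ^n × ℝ`. -/
def IsParabSubOn {n : ℕ} (G : Euc n → Euc n → ℝ) (Ω : Set (Euc n × ℝ)) (u : Euc n × ℝ → ℝ) : Prop :=
  UpperSemicontinuousOn u Ω ∧
  ∀ ψ : Euc n × ℝ → ℝ, ContDiff ℝ 1 ψ → ∀ z ∈ Ω,
    IsLocalMaxOn (fun w => u w - ψ w) Ω z →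
    deriv (fun s => ψ (z.1, s)) z.2 + G z.1 (gradient (fun x => ψ (x, z.2)) z.1) ≤ 0

/-- Viscosity supersolution of `u_t + G(x, D_x u) = 0` on `Ω ⊆ ℝ^n × ℝ`. -/
def IsParabSupOn {n : ℕ} (G : Euc n → Euc n → ℝ) (Ω : Set (Euc n × ℝ)) (u : Euc n × ℝ → ℝ) : Prop :=
  LowerSemicontinuousOn u Ω ∧
  ∀ ψ : Euc n × ℝ → ℝ, ContDiff ℝ 1 ψ → ∀ z ∈ Ω,
    IsLocalMinOn (fun w => u w - ψ w) Ω z →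
    0 ≤ deriv (fun s => ψ (z.1, s)) z.2 + G z.1 (gradient (fun x => ψ (x, z.2)) z.1)

/-- Viscosity subsolution of `u_t + H(x, y, D_x u, D_y u / ε) = 0` on `Ω ⊆ (ℝ^N × ℝ^M) × ℝ`. -/
def IsHJSubOn {N M : ℕ} (Hm : Euc N → Euc M → Euc N → Euc M → ℝ) (ε : ℝ)
    (Ω : Set ((Euc N × Euc M) × ℝ)) (u : (Euc N × Euc M) × ℝ → ℝ) : Prop :=
  UpperSemicontinuousOn u Ω ∧
  ∀ ψ : (Euc N × Euc M) × ℝ → ℝ, ContDiff ℝ 1 ψ → ∀ z ∈ Ω,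
    IsLocalMaxOn (fun w => u w - ψ w) Ω z →
    deriv (fun s => ψ (z.1, s)) z.2 +
      Hm z.1.1 z.1.2 (gradient (fun x => ψ ((x, z.1.2), z.2)) z.1.1)
        (ε⁻¹ • gradient (fun y => ψ ((z.1.1, y), z.2)) z.1.2) ≤ 0

/-- Viscosity supersolution of `u_t + H(x, y, D_x u, D_y u / ε) = 0` on `Ω`. -/
def IsHJSupOn {N M : ℕ} (Hm : Euc N → Euc M → Euc N → Euc M → ℝ) (ε : ℝ)
    (Ω : Set ((Euc N × Euc M) × ℝ)) (u : (Euc N × Euc M) × ℝ → ℝ) : Prop :=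
  LowerSemicontinuousOn u Ω ∧
  ∀ ψ : (Euc N × Euc M) × ℝ → ℝ, ContDiff ℝ 1 ψ → ∀ z ∈ Ω,
    IsLocalMinOn (fun w => u w - ψ w) Ω z →
    0 ≤ deriv (fun s => ψ (z.1, s)) z.2 +
      Hm z.1.1 z.1.2 (gradient (fun x => ψ ((x, z.1.2), z.2)) z.1.1)
        (ε⁻¹ • gradient (fun y => ψ ((z.1.1, y), z.2)) z.1.2)

/-- The upper weak semilimit `(limsup^# V^ε)(z)`. -/
def upperLim {Z : Type*} [TopologicalSpace Z] (V : ℝ → Z → ℝ) (z : Z) : ℝ :=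
  sSup { l : ℝ | ∃ (e : ℕ → ℝ) (w : ℕ → Z), (∀ n, 0 < e n) ∧
    Tendsto e atTop (𝓝 0) ∧ Tendsto w atTop (𝓝 z) ∧
    l = Filter.limsup (fun n => V (e n) (w n)) atTop }

/-- The lower weak semilimit `(liminf_# V^ε)(z)`. -/
def lowerLim {Z : Type*} [TopologicalSpace Z] (V : ℝ → Z → ℝ) (z : Z) : ℝ :=
  sInf { l : ℝ | ∃ (e : ℕ → ℝ) (w : ℕ → Z), (∀ n, 0 < e n) ∧
    Tendsto e atTop (𝓝 0) ∧ Tendsto w atTop (𝓝 z) ∧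
    l = Filter.liminf (fun n => V (e n) (w n)) atTop }

/-- The lower semicontinuous envelope `φ_#`. -/
def lscEnvelope {X : Type*} [TopologicalSpace X] (φ : X → ℝ) (x : X) : ℝ :=
  Filter.liminf φ (𝓝 x)

/-- Local equiboundedness of the family of value functions. -/
def LocEquibounded {N M : ℕ} (V : ℝ → Euc N → Euc M → ℝ → ℝ) : Prop :=
  ∀ C : Set (Euc N × Euc M × ℝ), Bornology.IsBounded C →
    ∃ Mb : ℝ, ∀ ε : ℝ, 0 < ε → ∀ z ∈ C, 0 ≤ z.2.2 → |V ε z.1 z.2.1 z.2.2| ≤ Mb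

/-- The sublevel set `Z_b(y)` of a Hamiltonian. -/
def sublevel {m : ℕ} (G : Euc m → Euc m → ℝ) (b : ℝ) (y : Euc m) : Set (Euc m) :=
  { q | G y q ≤ b }

/-- The support function `σ_b(y, v)` of the sublevel `Z_b(y)`. -/
def suppFn {m : ℕ} (G : Euc m → Euc m → ℝ) (b : ℝ) (y v : Euc m) : ℝ :=
  sSup ((fun q => ⟪q, v⟫) '' sublevel G b y)

/-- The intrinsic length of a curve (Lipschitz curves are differentiable a.e.). -/
def intrinsicLen {m : ℕ} (G : Euc m → Euc m → ℝ) (b : ℝ) (ξ : ℝ → Euc m) : ℝ :=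
  ∫ s in (0:ℝ)..1, suppFn G b (ξ s) (deriv ξ s)

/-- Admissible (Lipschitz) curves on `[0,1]` joining `y₁` to `y₂`. -/
def IsAdmCurve {m : ℕ} (ξ : ℝ → Euc m) (y₁ y₂ : Euc m) : Prop :=
  (∃ Kl : NNReal, LipschitzWith Kl ξ) ∧ ξ 0 = y₁ ∧ ξ 1 = y₂

/-- The intrinsic distance `S_b(y₁, y₂)`. -/
def intrinsicDist {m : ℕ} (G : Euc m → Euc m → ℝ) (b : ℝ) (y₁ y₂ : Euc m) : ℝ :=
  sInf { L : ℝ | ∃ ξ : ℝ → Euc m, IsAdmCurve ξ y₁ y₂ ∧ L = intrinsicLen G b ξ }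

/-- The weighted intrinsic length associated with a weight `h`. -/
def wIntrinsicLen {m : ℕ} (G : Euc m → Euc m → ℝ) (b : ℝ) (h : Euc m → ℝ) (ξ : ℝ → Euc m) : ℝ :=
  ∫ s in (0:ℝ)..1, h (ξ s) * suppFn G b (ξ s) (deriv ξ s)

/-- The weighted intrinsic distance `S_b^h(y₁, y₂)`. -/
def wIntrinsicDist {m : ℕ} (G : Euc m → Euc m → ℝ) (b : ℝ) (h : Euc m → ℝ) (y₁ y₂ : Euc m) : ℝ :=
  sInf { L : ℝ | ∃ ξ : ℝ → Euc m, IsAdmCurve ξ y₁ y₂ ∧ L = wIntrinsicLen G b h ξ }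

/-- The intrinsic critical distance `S(y₁, y₂)` of the cell problem at `(x₀, p₀)`. -/
def cellS {N M k : ℕ} (A : Set (Euc k))
    (f : Euc N → Euc M → Euc k → Euc N) (g : Euc N → Euc M → Euc k → Euc M)
    (ℓ : Euc N → Euc M → Euc k → ℝ) (x0 p0 : Euc N) (y₁ y₂ : Euc M) : ℝ :=
  intrinsicDist (cellH A f g ℓ x0 p0) (effH A f g ℓ x0 p0) y₁ y₂

/-- The Aubry set of `G` at the level `c`: points near which no global viscosity
subsolution of `G(y, Du) = c` is strict. -/
def AubrySet {m : ℕ} (G : Euc m → Euc m → ℝ) (c : ℝ) : Set (Euc m) :=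
  { y₀ | ¬ ∃ (u : Euc m → ℝ) (δ : ℝ) (U : Set (Euc m)),
      IsVSubOn G c univ u ∧ 0 < δ ∧ IsOpen U ∧ y₀ ∈ U ∧ IsVSubOn G (c - δ) U u }

end

/-!
The control is frozen between the sampling times `n τ`. Fix `R` so large that `B` lies in
`{‖y‖ ≤ R}`. By (H3), for `‖y‖ = R` some control satisfies `⟪y, g x y a⟫ < 0`: otherwise the closed
half-space `{w | 0 ≤ ⟪y, w⟫}` would contain the closed convex hull of the velocities, hence a ball
around `0`. The slow variable moves by at most `Q S` up to time `S / ε`, so only a compact part `K`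
of `{‖y‖ = R}` is relevant. Cover `K` by finitely many open sets on each of which one fixed control
points inward, and let `δ` be a Lebesgue number. At a sampling time use a control that points inward
on the part of `K` within distance `δ / 2`. Seen backwards from a visit to `K`, the state has moved
by at most `2 τ` times its speed there, which is less than `δ / 2` for small `τ`; so the frozen
control still points inward at the visit. Hence `‖η‖²` has negative right derivative whenever
`‖η‖ = R`, and `‖η‖` never exceeds `R`. The step `τ` may depend on `ε`, but `R` does not.
-/

open scoped NNReal

section IntegralCurve

variable {E : Type*} [NormedAddCommGroup E] [NormedSpace ℝ E] {u : E → E} {L : ℝ≥0} {a b : ℝ}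

theorem exists_isIntegralCurveOn_Icc_of_lipschitzWith [CompleteSpace E] (hu : LipschitzWith L u)
    (hab : a ≤ b) (hL : L * (b - a) ≤ 1 / 2) (z : E) :
    ∃ γ : ℝ → E, γ a = z ∧ IsIntegralCurveOn γ (fun _ ↦ u) (Icc a b) := by
  -- On the ball of radius `2 (b - a) ‖u z‖` around `z` the speed is at most `2 ‖u z‖`.
  let r : ℝ≥0 := 2 * (b - a).toNNReal * ‖u z‖₊
  have hr : (r : ℝ) = 2 * (b - a) * ‖u z‖ := by
    simp [r, sub_nonneg.mpr hab]
  have speed_le : ∀ x ∈ closedBall z r, ‖u x‖ ≤ (2 * ‖u z‖₊ : ℝ≥0) := fun x hx ↦ by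
    have hxz : ‖x - z‖ ≤ 2 * (b - a) * ‖u z‖ := hr ▸ mem_closedBall_iff_norm.mp hx
    calc ‖u x‖ ≤ ‖u z‖ + ‖u x - u z‖ := norm_le_norm_add_norm_sub' _ _
      _ ≤ ‖u z‖ + L * (2 * (b - a) * ‖u z‖) := by
          gcongr
          exact (hu.norm_sub_le x z).trans (by gcongr)
      _ = ‖u z‖ + L * (b - a) * (2 * ‖u z‖) := by ring
      _ ≤ ‖u z‖ + 1 / 2 * (2 * ‖u z‖) := by gcongr
      _ = (2 * ‖u z‖₊ : ℝ≥0) := by push_cast; ring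
  have hPL : IsPicardLindelof (fun _ ↦ u) ⟨a, left_mem_Icc.mpr hab⟩ z r 0 (2 * ‖u z‖₊) L := by
    refine .of_time_independent speed_le hu.lipschitzOnWith ?_
    simp only [sub_self, sub_nonneg.mpr hab, sup_of_le_left, hr]
    push_cast
    linarith
  exact hPL.exists_eq_forall_mem_Icc_hasDerivWithinAt₀

/-- The largest displacement `m` from `γ t` satisfies `m ≤ (b - a) (‖u (γ t)‖ + L m)`. -/
theorem norm_sub_le_of_isIntegralCurveOn_Icc (hu : LipschitzWith L u) {γ : ℝ → E}
    (hγ : IsIntegralCurveOn γ (fun _ ↦ u) (Icc a b)) (hL : L * (b - a) ≤ 1 / 2) {s t : ℝ}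
    (hs : s ∈ Icc a b) (ht : t ∈ Icc a b) :
    ‖γ s - γ t‖ ≤ 2 * (b - a) * ‖u (γ t)‖ := by
  obtain ⟨s₀, hs₀, hmax⟩ := isCompact_Icc.exists_isMaxOn ⟨s, hs⟩
    (hγ.continuousOn.sub continuousOn_const).norm (f := fun s ↦ ‖γ s - γ t‖)
  set m := ‖γ s₀ - γ t‖
  have speed_le : ∀ x ∈ Icc a b, ‖u (γ x)‖ ≤ ‖u (γ t)‖ + L * m := fun x hx ↦
    calc ‖u (γ x)‖ ≤ ‖u (γ t)‖ + ‖u (γ x) - u (γ t)‖ := norm_le_norm_add_norm_sub' _ _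
      _ ≤ ‖u (γ t)‖ + L * m := by
          gcongr
          exact (hu.norm_sub_le _ _).trans (by gcongr; exact hmax hx)
  have hm_le : m ≤ (b - a) * ‖u (γ t)‖ + 1 / 2 * m :=
    calc m ≤ (‖u (γ t)‖ + L * m) * |s₀ - t| :=
          (convex_Icc a b).norm_image_sub_le_of_norm_hasDerivWithin_le hγ speed_le ht hs₀
      _ ≤ (‖u (γ t)‖ + L * m) * (b - a) := by
          gcongr
          exact abs_sub_le_of_le_of_le hs₀.1 hs₀.2 ht.1 ht.2
      _ = (b - a) * ‖u (γ t)‖ + L * (b - a) * m := by ring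
      _ ≤ (b - a) * ‖u (γ t)‖ + 1 / 2 * m := by gcongr
  have hsm : ‖γ s - γ t‖ ≤ m := hmax hs
  linarith

end IntegralCurve

theorem natFloor_div_eq_iff_mem_Ico {τ t : ℝ} (hτ : 0 < τ) (ht : 0 ≤ t) {n : ℕ} :
    ⌊t / τ⌋₊ = n ↔ t ∈ Ico (n * τ) ((n + 1 : ℕ) * τ) := by
  rw [Nat.floor_eq_iff (by positivity), le_div_iff₀ hτ, div_lt_iff₀ hτ, mem_Ico, Nat.cast_succ]

section SampledSolution

variable {E C : Type*}

/-- The open-loop control generated along the curve `W` by the feedback `κ` when the state is only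
observed at the sampling times `n * τ`: the control is held constant between two samples. -/
noncomputable def sampledControl (κ : E → C) (τ : ℝ) (W : ℝ → E) (t : ℝ) : C :=
  κ (W (⌊t / τ⌋₊ * τ))

theorem sampledControl_eq_of_mem_Ico (κ : E → C) {τ : ℝ} (hτ : 0 < τ) (W : ℝ → E) {n : ℕ} {t : ℝ}
    (ht : t ∈ Ico (n * τ) ((n + 1 : ℕ) * τ)) : sampledControl κ τ W t = κ (W (n * τ)) := by
  have ht0 : 0 ≤ t := (by positivity : 0 ≤ n * τ).trans ht.1
  rw [sampledControl, (natFloor_div_eq_iff_mem_Ico hτ ht0).mpr ht]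

theorem measurable_sampledControl [MeasurableSpace C] (κ : E → C) (τ : ℝ) (W : ℝ → E) :
    Measurable (sampledControl κ τ W) :=
  (measurable_from_nat (f := fun n : ℕ ↦ κ (W (n * τ)))).comp
    (Nat.measurable_floor.comp (measurable_id.div_const τ))

variable [NormedAddCommGroup E] [NormedSpace ℝ E] {v : C → E → E} {κ : E → C} {τ : ℝ}
  {W : ℝ → E}

/-- `W` is a sample-and-hold solution of the closed loop `w' = v (κ w) w`: on each interval
`[n τ, (n + 1) τ]` it is an integral curve of the field whose control is frozen at the
value `κ (W (n τ))`. -/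
def IsSampledSolution (v : C → E → E) (κ : E → C) (τ : ℝ) (W : ℝ → E) : Prop :=
  ∀ n : ℕ, IsIntegralCurveOn W (fun _ ↦ v (κ (W (n * τ)))) (Icc (n * τ) ((n + 1 : ℕ) * τ))

namespace IsSampledSolution

theorem continuousOn_Icc (h : IsSampledSolution v κ τ W) (hτ : 0 < τ) (T : ℝ) :
    ContinuousOn W (Icc 0 T) := by
  have grid : ∀ n : ℕ, ContinuousOn W (Icc 0 (n * τ)) := fun n ↦ by
    induction n with
    | zero => simp
    | succ n ih =>
      rw [← Icc_union_Icc_eq_Icc (b := n * τ) (by positivity) (by gcongr; simp)]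
      exact ih.union_of_isClosed (h n).continuousOn isClosed_Icc isClosed_Icc
  obtain ⟨n, hn⟩ := exists_nat_ge (T / τ)
  exact (grid n).mono (Icc_subset_Icc_right ((div_le_iff₀ hτ).mp hn))

theorem hasDerivWithinAt_Ici (h : IsSampledSolution v κ τ W) (hτ : 0 < τ) {t : ℝ} (ht : 0 ≤ t) :
    HasDerivWithinAt W (v (sampledControl κ τ W t) (W t)) (Ici t) t := by
  have ht_mem := (natFloor_div_eq_iff_mem_Ico hτ ht).mp rfl
  exact (h ⌊t / τ⌋₊ t (Ico_subset_Icc_self ht_mem)).mono_of_mem_nhdsWithin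
    (Icc_mem_nhdsGE_of_mem ht_mem)

theorem intervalIntegrable_comp {G : Type*} [NormedAddCommGroup G] {F : C → E → G}
    (h : IsSampledSolution v κ τ W) (hτ : 0 < τ) (hF : ∀ w, Continuous (F (κ w))) {T : ℝ}
    (hT : 0 ≤ T) :
    IntervalIntegrable (fun t ↦ F (sampledControl κ τ W t) (W t)) volume 0 T := by
  have piece : ∀ n : ℕ, IntervalIntegrable (fun t ↦ F (sampledControl κ τ W t) (W t)) volume
      (n * τ) ((n + 1 : ℕ) * τ) := fun n ↦ by
    have hle : n * τ ≤ (n + 1 : ℕ) * τ := by gcongr; simp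
    have hcont : ContinuousOn (fun t ↦ F (κ (W (n * τ))) (W t)) (Icc (n * τ) ((n + 1 : ℕ) * τ)) :=
      (hF _).comp_continuousOn (h n).continuousOn
    refine (hcont.intervalIntegrable_of_Icc hle).congr_uIoo fun t ht ↦ ?_
    rw [uIoo_of_le hle] at ht
    simp only [sampledControl_eq_of_mem_Ico κ hτ W (Ioo_subset_Ico_self ht)]
  obtain ⟨n, hn⟩ := exists_nat_ge (T / τ)
  have grid : IntervalIntegrable (fun t ↦ F (sampledControl κ τ W t) (W t)) volume
      ((0 : ℕ) * τ) (n * τ) := .trans_iterate fun k _ ↦ piece k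
  rw [Nat.cast_zero, zero_mul] at grid
  exact grid.mono_set (uIcc_subset_uIcc_left (mem_uIcc_of_le hT ((div_le_iff₀ hτ).mp hn)))

end IsSampledSolution

theorem exists_isSampledSolution [CompleteSpace E] {L : ℝ≥0} (hv : ∀ w, LipschitzWith L (v (κ w)))
    (hτ : 0 < τ) (hL : L * τ ≤ 1 / 2) (z : E) :
    ∃ W : ℝ → E, W 0 = z ∧ IsSampledSolution v κ τ W := by
  have piece : ∀ (n : ℕ) (w : E), ∃ γ : ℝ → E, γ (n * τ) = w ∧
      IsIntegralCurveOn γ (fun _ ↦ v (κ w)) (Icc (n * τ) ((n + 1 : ℕ) * τ)) := fun n w ↦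
    exists_isIntegralCurveOn_Icc_of_lipschitzWith (hv w) (by gcongr; simp)
      (by convert hL using 2; push_cast; ring) w
  choose Γ Γ_start Γ_curve using piece
  let node : ℕ → E := Nat.rec z fun n w ↦ Γ n w ((n + 1 : ℕ) * τ)
  let W : ℝ → E := fun t ↦ Γ ⌊t / τ⌋₊ (node ⌊t / τ⌋₊) t
  have W_node : ∀ n : ℕ, W (n * τ) = node n := fun n ↦ by
    simp only [W, mul_div_cancel_right₀ _ hτ.ne', Nat.floor_natCast, Γ_start]
  have W_eqOn : ∀ n : ℕ, EqOn W (Γ n (node n)) (Icc (n * τ) ((n + 1 : ℕ) * τ)) := fun n t ht ↦ by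
    rcases ht.2.lt_or_eq with hlt | rfl
    · have ht0 : 0 ≤ t := (by positivity : 0 ≤ n * τ).trans ht.1
      simp only [W, (natFloor_div_eq_iff_mem_Ico hτ ht0).mpr ⟨ht.1, hlt⟩]
    · exact W_node (n + 1)
  refine ⟨W, (congrArg W (by simp)).trans (W_node 0), fun n t ht ↦ ?_⟩
  rw [W_node, W_eqOn n ht]
  exact (Γ_curve n (node n) t ht).congr (W_eqOn n) (W_eqOn n ht)

end SampledSolution

section Feedback

theorem exists_feedback_of_isCompact {X C : Type*} [PseudoMetricSpace X] {A : Set C}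
    (hA : A.Nonempty) {K : Set X} (hK : IsCompact K) {U : C → Set X} (hU : ∀ a ∈ A, IsOpen (U a))
    (hKU : K ⊆ ⋃ a ∈ A, U a) :
    ∃ (κ : X → C) (δ : ℝ), (range κ).Finite ∧ range κ ⊆ A ∧ 0 < δ ∧
      ∀ w, ball w δ ∩ K ⊆ U (κ w) := by
  obtain ⟨a₀, ha₀⟩ := hA
  obtain ⟨T, hTA, hT, hKT⟩ := hK.elim_finite_subcover_image hU hKU
  obtain ⟨δ, hδ, hball⟩ := lebesgue_number_lemma_of_metric (c := fun a : T ↦ U a) hK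
    (fun a ↦ hU a (hTA a.2)) (by rwa [iUnion_subtype])
  have select : ∀ w, ∃ a ∈ insert a₀ T, ball w (δ / 2) ∩ K ⊆ U a := fun w ↦ by
    rcases (ball w (δ / 2) ∩ K).eq_empty_or_nonempty with hempty | ⟨x, hxw, hxK⟩
    · exact ⟨a₀, mem_insert _ _, by simp [hempty]⟩
    · obtain ⟨a, ha⟩ := hball x hxK
      refine ⟨a, mem_insert_of_mem _ a.2, fun y hy ↦ ha ?_⟩
      calc dist y x ≤ dist y w + dist x w := dist_triangle_right _ _ _
        _ < δ / 2 + δ / 2 := add_lt_add hy.1 hxw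
        _ = δ := add_halves δ
  choose κ hκT hκU using select
  exact ⟨κ, δ / 2, (hT.insert a₀).subset (range_subset_iff.mpr hκT),
    (range_subset_iff.mpr hκT).trans (insert_subset ha₀ hTA), half_pos hδ, hκU⟩

theorem exists_forall_norm_le_of_finite_of_isCompact {X C G : Type*} [TopologicalSpace X]
    [SeminormedAddCommGroup G] {T : Set C} (hT : T.Finite) {K : Set X} (hK : IsCompact K)
    {v : C → X → G} (hv : ∀ a ∈ T, Continuous (v a)) :
    ∃ P, ∀ a ∈ T, ∀ w ∈ K, ‖v a w‖ ≤ P := by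
  have hbdd : Bornology.IsBounded (⋃ a ∈ T, v a '' K) :=
    (Bornology.isBounded_biUnion hT).mpr fun a ha ↦ (hK.image (hv a ha)).isBounded
  obtain ⟨P, hP⟩ := hbdd.exists_norm_le
  exact ⟨P, fun a ha w hw ↦ hP _ (mem_biUnion ha (mem_image_of_mem _ hw))⟩

theorem exists_isSampledSolution_forall_mem {E C : Type*} [NormedAddCommGroup E] [NormedSpace ℝ E]
    [CompleteSpace E] {A : Set C} (hA : A.Nonempty) {L : ℝ≥0} {v : C → E → E}
    (hv : ∀ a ∈ A, LipschitzWith L (v a)) {K : Set E} (hK : IsCompact K) {U : C → Set E}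
    (hU : ∀ a ∈ A, IsOpen (U a)) (hKU : K ⊆ ⋃ a ∈ A, U a) (z : E) :
    ∃ (κ : E → C) (τ : ℝ) (W : ℝ → E), 0 < τ ∧ (∀ w, κ w ∈ A) ∧ W 0 = z ∧
      IsSampledSolution v κ τ W ∧ ∀ t, 0 ≤ t → W t ∈ K → W t ∈ U (sampledControl κ τ W t) := by
  obtain ⟨κ, δ, hκ_fin, hκA, hδ, hκU⟩ := exists_feedback_of_isCompact hA hK hU hKU
  replace hκA : ∀ w, κ w ∈ A := range_subset_iff.mp hκA
  obtain ⟨P, hP⟩ := exists_forall_norm_le_of_finite_of_isCompact hκ_fin hK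
    (forall_mem_range.mpr fun w ↦ (hv _ (hκA w)).continuous)
  obtain ⟨τ, ⟨hLτ, hPτ⟩, hτ⟩ : ∃ τ : ℝ, (L * τ < 1 / 2 ∧ 2 * τ * P < δ) ∧ 0 < τ := by
    have small_mul : ∀ᶠ τ : ℝ in 𝓝 0, L * τ < 1 / 2 :=
      (continuous_const_mul (L : ℝ)).continuousAt.eventually_lt_const (by simp)
    have small_disp : ∀ᶠ τ : ℝ in 𝓝 0, 2 * τ * P < δ :=
      Continuous.continuousAt (by fun_prop) |>.eventually_lt_const (by simpa using hδ)
    have small_pos : ∀ᶠ τ : ℝ in 𝓝[>] 0, (L * τ < 1 / 2 ∧ 2 * τ * P < δ) ∧ 0 < τ :=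
      ((small_mul.and small_disp).filter_mono nhdsWithin_le_nhds).and self_mem_nhdsWithin
    exact small_pos.exists
  obtain ⟨W, hW0, hW⟩ := exists_isSampledSolution (fun w ↦ hv _ (hκA w)) hτ hLτ.le z
  refine ⟨κ, τ, W, hτ, hκA, hW0, hW, fun t ht htK ↦ hκU _ ⟨mem_ball_iff_norm'.mpr ?_, htK⟩⟩
  set n := ⌊t / τ⌋₊
  have ht_mem : t ∈ Ico (n * τ) ((n + 1 : ℕ) * τ) := (natFloor_div_eq_iff_mem_Ico hτ ht).mp rfl
  have hlen : (n + 1 : ℕ) * τ - n * τ = τ := by push_cast; ring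
  calc ‖W (n * τ) - W t‖
      ≤ 2 * ((n + 1 : ℕ) * τ - n * τ) * ‖v (κ (W (n * τ))) (W t)‖ :=
        norm_sub_le_of_isIntegralCurveOn_Icc (hv _ (hκA _)) (hW n) (by rw [hlen]; exact hLτ.le)
          (left_mem_Icc.mpr (ht_mem.1.trans ht_mem.2.le)) (Ico_subset_Icc_self ht_mem)
    _ ≤ 2 * τ * P := by rw [hlen]; gcongr; exact hP _ (mem_range_self _) _ htK
    _ < δ := hPτ

end Feedback

section InnerProduct

variable {F : Type*} [NormedAddCommGroup F] [InnerProductSpace ℝ F]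

theorem exists_inner_neg_of_ball_subset_closure_convexHull {s : Set F} {r : ℝ} (hr : 0 < r)
    (hs : ball 0 r ⊆ closure (convexHull ℝ s)) {y : F} (hy : y ≠ 0) : ∃ w ∈ s, ⟪y, w⟫ < 0 := by
  by_contra! hcon
  have hull_subset : closure (convexHull ℝ s) ⊆ {w | 0 ≤ ⟪y, w⟫} :=
    closure_minimal (convexHull_min hcon (convex_halfSpace_ge (innerₗ F y).isLinear 0))
      (isClosed_le continuous_const (by fun_prop))
  have small_neg : ∀ᶠ c : ℝ in 𝓝[<] 0, c • y ∈ ball 0 r :=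
    nhdsWithin_le_nhds <| (continuous_id.smul continuous_const).continuousAt.preimage_mem_nhds
      (by simpa using ball_mem_nhds (0 : F) hr)
  obtain ⟨c, hcr, hc⟩ := (small_neg.and self_mem_nhdsWithin).exists
  have hinner : 0 ≤ c * ⟪y, y⟫ := inner_smul_right y y c ▸ hull_subset (hs hcr)
  exact hinner.not_gt (mul_neg_of_neg_of_pos hc (real_inner_self_pos.mpr hy))

theorem norm_le_of_inner_deriv_right_neg {η η' : ℝ → F} {a b R : ℝ}
    (hη : ContinuousOn η (Icc a b)) (hη' : ∀ t ∈ Ico a b, HasDerivWithinAt η (η' t) (Ici t) t)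
    (ha : ‖η a‖ ≤ R) (hneg : ∀ t ∈ Ico a b, ‖η t‖ = R → ⟪η t, η' t⟫ < 0) :
    ∀ t ∈ Icc a b, ‖η t‖ ≤ R := by
  have hR : 0 ≤ R := (norm_nonneg _).trans ha
  have norm_sq_le : ∀ ⦃t⦄, t ∈ Icc a b → ‖η t‖ ^ 2 ≤ R ^ 2 :=
    image_le_of_deriv_right_lt_deriv_boundary (hη.norm.pow 2) (fun t ht ↦ (hη' t ht).norm_sq)
      (pow_le_pow_left₀ (norm_nonneg _) ha 2) (fun t ↦ hasDerivAt_const t (R ^ 2)) fun t ht hsq ↦ by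
        have := hneg t ht ((pow_left_inj₀ (norm_nonneg _) hR two_ne_zero).mp hsq)
        linarith
  exact fun t ht ↦ (pow_le_pow_iff_left₀ (norm_nonneg _) hR two_ne_zero).mp (norm_sq_le ht)

end InnerProduct

section SlowFast

theorem lipschitzWith_uncurry_of_norm_sub_le {E F G : Type*} [SeminormedAddCommGroup E]
    [SeminormedAddCommGroup F] [SeminormedAddCommGroup G] {h : E → F → G} {L : ℝ}
    (hh : ∀ x₁ x₂ y₁ y₂, ‖h x₁ y₁ - h x₂ y₂‖ ≤ L * (‖x₁ - x₂‖ + ‖y₁ - y₂‖)) :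
    LipschitzWith (2 * L.toNNReal) fun z : E × F ↦ h z.1 z.2 :=
  LipschitzWith.of_dist_le_mul fun z w ↦ by
    rw [dist_eq_norm, dist_eq_norm]
    calc ‖h z.1 z.2 - h w.1 w.2‖ ≤ L * (‖z.1 - w.1‖ + ‖z.2 - w.2‖) := hh ..
      _ ≤ L.toNNReal * (‖z - w‖ + ‖z - w‖) := by
          gcongr
          exacts [Real.le_coe_toNNReal L, norm_fst_le (z - w), norm_snd_le (z - w)]
      _ = (2 * L.toNNReal : ℝ≥0) * ‖z - w‖ := by push_cast; ring

variable {E F C : Type*} [NormedAddCommGroup E] [NormedSpace ℝ E] [NormedAddCommGroup F]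
  {f : E → F → C → E} {g : E → F → C → F} {ε : ℝ}

/-- The right-hand side `(ε f, g)` of `(CD_ε)`, as a vector field on the product space for each
value of the control. -/
def slowFastField (ε : ℝ) (f : E → F → C → E) (g : E → F → C → F) (a : C) (z : E × F) : E × F :=
  (ε • f z.1 z.2 a, g z.1 z.2 a)

theorem lipschitzWith_slowFastField {a : C} {L : ℝ≥0}
    (hf : LipschitzWith L fun z : E × F ↦ f z.1 z.2 a)
    (hg : LipschitzWith L fun z : E × F ↦ g z.1 z.2 a) (ε : ℝ) :
    LipschitzWith (max (‖ε‖₊ * L) L) (slowFastField ε f g a) :=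
  ((lipschitzWith_smul ε).comp hf).prodMk hg

namespace IsSampledSolution

variable [NormedSpace ℝ F] {κ : E × F → C} {τ : ℝ} {W : ℝ → E × F}

theorem hasDerivWithinAt_fst (h : IsSampledSolution (slowFastField ε f g) κ τ W) (hτ : 0 < τ)
    {t : ℝ} (ht : 0 ≤ t) :
    HasDerivWithinAt (fun t ↦ (W t).1) (ε • f (W t).1 (W t).2 (sampledControl κ τ W t))
      (Ici t) t :=
  (ContinuousLinearMap.fst ℝ E F).hasFDerivAt.comp_hasDerivWithinAt t (h.hasDerivWithinAt_Ici hτ ht)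

theorem hasDerivWithinAt_snd (h : IsSampledSolution (slowFastField ε f g) κ τ W) (hτ : 0 < τ)
    {t : ℝ} (ht : 0 ≤ t) :
    HasDerivWithinAt (fun t ↦ (W t).2) (g (W t).1 (W t).2 (sampledControl κ τ W t)) (Ici t) t :=
  (ContinuousLinearMap.snd ℝ E F).hasFDerivAt.comp_hasDerivWithinAt t (h.hasDerivWithinAt_Ici hτ ht)

theorem norm_fst_le (h : IsSampledSolution (slowFastField ε f g) κ τ W) (hτ : 0 < τ)
    (hε : 0 ≤ ε) {Q : ℝ} (hf : ∀ x y w, ‖f x y (κ w)‖ ≤ Q) {t : ℝ} (ht : 0 ≤ t) :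
    ‖(W t).1‖ ≤ ‖(W 0).1‖ + ε * Q * t := by
  have speed_le : ∀ s ∈ Ico 0 t, ‖ε • f (W s).1 (W s).2 (sampledControl κ τ W s)‖ ≤ ε * Q :=
    fun s _ ↦ by
      rw [norm_smul, Real.norm_of_nonneg hε]
      gcongr
      exact hf _ _ _
  have displacement_le : ‖(W t).1 - (W 0).1‖ ≤ ε * Q * (t - 0) :=
    norm_image_sub_le_of_norm_deriv_right_le_segment (h.continuousOn_Icc hτ t).fst
      (fun s hs ↦ h.hasDerivWithinAt_fst hτ hs.1) speed_le t (right_mem_Icc.mpr ht)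
  rw [sub_zero] at displacement_le
  exact (norm_le_norm_add_norm_sub' _ _).trans (by gcongr)

end IsSampledSolution

end SlowFast

section Trajectory

variable {N M k : ℕ} {f : Euc N → Euc M → Euc k → Euc N} {g : Euc N → Euc M → Euc k → Euc M}
  {A : Set (Euc k)} {ε : ℝ}

theorem IsSampledSolution.isTrajectory {κ : Euc N × Euc M → Euc k} {τ : ℝ}
    {W : ℝ → Euc N × Euc M} (h : IsSampledSolution (slowFastField ε f g) κ τ W) (hτ : 0 < τ)
    (hf : ∀ w, Continuous fun z : Euc N × Euc M ↦ f z.1 z.2 (κ w))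
    (hg : ∀ w, Continuous fun z : Euc N × Euc M ↦ g z.1 z.2 (κ w)) :
    IsTrajectory f g ε (sampledControl κ τ W) (fun t ↦ (W t).1) (fun t ↦ (W t).2) := by
  have hf_int {t : ℝ} (ht : 0 ≤ t) :=
    h.intervalIntegrable_comp (F := fun a z ↦ f z.1 z.2 a) hτ hf ht
  have hg_int {t : ℝ} (ht : 0 ≤ t) :=
    h.intervalIntegrable_comp (F := fun a z ↦ g z.1 z.2 a) hτ hg ht
  refine ⟨fun t ↦ hf_int, fun t ↦ hg_int, fun t ht ↦ ?_, fun t ht ↦ ?_⟩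
  · rw [← intervalIntegral.integral_smul, intervalIntegral.integral_eq_sub_of_hasDeriv_right_of_le
      ht (h.continuousOn_Icc hτ t).fst
      (fun s hs ↦ (h.hasDerivWithinAt_fst hτ hs.1.le).Ioi_of_Ici) ((hf_int ht).smul ε),
      add_sub_cancel]
  · rw [intervalIntegral.integral_eq_sub_of_hasDeriv_right_of_le ht (h.continuousOn_Icc hτ t).snd
      (fun s hs ↦ (h.hasDerivWithinAt_snd hτ hs.1.le).Ioi_of_Ici) (hg_int ht), add_sub_cancel]

theorem exists_isTrajectory_norm_le (hA : A.Nonempty) {L : ℝ≥0} {Q R T : ℝ}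
    (hf : ∀ a ∈ A, LipschitzWith L fun z : Euc N × Euc M ↦ f z.1 z.2 a)
    (hg : ∀ a ∈ A, LipschitzWith L fun z : Euc N × Euc M ↦ g z.1 z.2 a)
    (hfQ : ∀ x y, ∀ a ∈ A, ‖f x y a‖ ≤ Q)
    (hin : ∀ x y, ‖y‖ = R → ∃ a ∈ A, ⟪y, g x y a⟫ < 0) (hε : 0 ≤ ε) {z : Euc N × Euc M}
    (hz : ‖z.2‖ ≤ R) :
    ∃ (α : ℝ → Euc k) (ξ : ℝ → Euc N) (η : ℝ → Euc M),
      IsControl A α ∧ IsTrajectory f g ε α ξ η ∧ ξ 0 = z.1 ∧ η 0 = z.2 ∧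
      ∀ t ∈ Icc 0 T, ‖ξ t‖ ≤ ‖z.1‖ + ε * Q * t ∧ ‖η t‖ ≤ R := by
  let K : Set (Euc N × Euc M) := closedBall 0 (‖z.1‖ + ε * Q * T) ×ˢ sphere 0 R
  let inward (a : Euc k) : Set (Euc N × Euc M) := {w | ⟪w.2, g w.1 w.2 a⟫ < 0}
  have hK : IsCompact K := (isCompact_closedBall _ _).prod (isCompact_sphere _ _)
  have inward_open : ∀ a ∈ A, IsOpen (inward a) := fun a ha ↦
    isOpen_lt (continuous_snd.inner (hg a ha).continuous) continuous_const
  have inward_cover : K ⊆ ⋃ a ∈ A, inward a := fun w hw ↦ by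
    obtain ⟨a, ha, hneg⟩ := hin w.1 w.2 (mem_sphere_zero_iff_norm.mp hw.2)
    exact mem_biUnion ha hneg
  obtain ⟨κ, τ, W, hτ, hκA, hW0, hW, W_inward⟩ := exists_isSampledSolution_forall_mem hA
    (fun a ha ↦ lipschitzWith_slowFastField (hf a ha) (hg a ha) ε) hK inward_open inward_cover z
  have slow_le {t : ℝ} (ht : 0 ≤ t) : ‖(W t).1‖ ≤ ‖z.1‖ + ε * Q * t :=
    hW0 ▸ hW.norm_fst_le hτ hε (fun x y w ↦ hfQ x y _ (hκA w)) ht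
  have hQ : 0 ≤ Q := (norm_nonneg _).trans (hfQ 0 0 _ (hκA z))
  have fast_le : ∀ t ∈ Icc 0 T, ‖(W t).2‖ ≤ R :=
    norm_le_of_inner_deriv_right_neg (hW.continuousOn_Icc hτ T).snd
      (fun t ht ↦ hW.hasDerivWithinAt_snd hτ ht.1) (by rwa [hW0]) fun t ht htR ↦
        W_inward t ht.1 ⟨mem_closedBall_zero_iff.mpr ((slow_le ht.1).trans (by
          gcongr
          exact ht.2.le)), mem_sphere_zero_iff_norm.mpr htR⟩
  exact ⟨sampledControl κ τ W, fun t ↦ (W t).1, fun t ↦ (W t).2,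
    ⟨measurable_sampledControl κ τ W, fun t ↦ hκA _⟩,
    hW.isTrajectory hτ (fun w ↦ (hf _ (hκA w)).continuous) (fun w ↦ (hg _ (hκA w)).continuous),
    congrArg Prod.fst hW0, congrArg Prod.snd hW0, fun t ht ↦ ⟨slow_le ht.1, fast_le t ht⟩⟩

end Trajectory

theorem statement4_general {N M k : ℕ} (A : Set (Euc k)) (hA : A.Nonempty)
    (f : Euc N → Euc M → Euc k → Euc N) (g : Euc N → Euc M → Euc k → Euc M) (L Q : ℝ)
    (hf : ∀ (x₁ x₂ : Euc N) (y₁ y₂ : Euc M), ∀ a ∈ A,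
      ‖f x₁ y₁ a - f x₂ y₂ a‖ ≤ L * (‖x₁ - x₂‖ + ‖y₁ - y₂‖))
    (hg : ∀ (x₁ x₂ : Euc N) (y₁ y₂ : Euc M), ∀ a ∈ A,
      ‖g x₁ y₁ a - g x₂ y₂ a‖ ≤ L * (‖x₁ - x₂‖ + ‖y₁ - y₂‖))
    (hfQ : ∀ x y, ∀ a ∈ A, ‖f x y a‖ ≤ Q)
    (hin : ∃ R₀ : ℝ, ∀ x y, R₀ < ‖y‖ → ∃ a ∈ A, ⟪y, g x y a⟫ < 0)
    (B : Set (Euc N × Euc M)) (hB : Bornology.IsBounded B) (S : ℝ) (hS : 0 ≤ S) :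
    ∃ B0 : Set (Euc N × Euc M), Bornology.IsBounded B0 ∧ B ⊆ B0 ∧
      ∀ z ∈ B, ∀ ε : ℝ, 0 < ε →
        ∃ (α : ℝ → Euc k) (ξ : ℝ → Euc N) (η : ℝ → Euc M),
          IsControl A α ∧ IsTrajectory f g ε α ξ η ∧ ξ 0 = z.1 ∧ η 0 = z.2 ∧
          ∀ t, 0 ≤ t → t ≤ S / ε → (ξ t, η t) ∈ B0 := by
  obtain ⟨R₀, hin⟩ := hin
  obtain ⟨ρ, hρ⟩ := hB.exists_norm_le
  obtain ⟨R, hR⟩ := exists_gt (max R₀ ρ)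
  obtain ⟨hR₀R, hρR⟩ := max_lt_iff.mp hR
  have hQ : 0 ≤ Q := hA.elim fun a ha ↦ (norm_nonneg _).trans (hfQ 0 0 a ha)
  refine ⟨closedBall 0 (ρ + Q * S) ×ˢ closedBall 0 R,
    isBounded_closedBall.prod isBounded_closedBall, fun z hz ↦ ⟨?_, ?_⟩, fun z hz ε hε ↦ ?_⟩
  · exact mem_closedBall_zero_iff.mpr <|
      (norm_fst_le z).trans <| (hρ z hz).trans (le_add_of_nonneg_right (by positivity))
  · exact mem_closedBall_zero_iff.mpr <| (norm_snd_le z).trans <| (hρ z hz).trans hρR.le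
  obtain ⟨α, ξ, η, hα, htraj, hξ₀, hη₀, hbound⟩ := exists_isTrajectory_norm_le (T := S / ε) hA
    (fun a ha ↦ lipschitzWith_uncurry_of_norm_sub_le fun x₁ x₂ y₁ y₂ ↦ hf x₁ x₂ y₁ y₂ a ha)
    (fun a ha ↦ lipschitzWith_uncurry_of_norm_sub_le fun x₁ x₂ y₁ y₂ ↦ hg x₁ x₂ y₁ y₂ a ha)
    hfQ (fun x y hy ↦ hin x y (hy ▸ hR₀R)) hε.le
    ((norm_snd_le z).trans <| (hρ z hz).trans hρR.le)
  refine ⟨α, ξ, η, hα, htraj, hξ₀, hη₀, fun t ht htS ↦ ⟨mem_closedBall_zero_iff.mpr ?_,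
    mem_closedBall_zero_iff.mpr (hbound t ⟨ht, htS⟩).2⟩⟩
  calc ‖ξ t‖ ≤ ‖z.1‖ + ε * Q * t := (hbound t ⟨ht, htS⟩).1
    _ ≤ ρ + ε * Q * (S / ε) := by
        gcongr
        exact (norm_fst_le z).trans (hρ z hz)
    _ = ρ + Q * S := by field_simp

theorem statement4
    {N M k : ℕ} (A : Set (Euc k)) (hA : IsCompact A) (hAne : A.Nonempty)
    (f : Euc N → Euc M → Euc k → Euc N) (g : Euc N → Euc M → Euc k → Euc M)
    (L0 Q0 : ℝ) (hL0 : 0 < L0) (hQ0 : 0 < Q0)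
    (hfLip : ∀ (x₁ x₂ : Euc N) (y₁ y₂ : Euc M), ∀ a ∈ A,
      ‖f x₁ y₁ a - f x₂ y₂ a‖ ≤ L0 * (‖x₁ - x₂‖ + ‖y₁ - y₂‖))
    (hgLip : ∀ (x₁ x₂ : Euc N) (y₁ y₂ : Euc M), ∀ a ∈ A,
      ‖g x₁ y₁ a - g x₂ y₂ a‖ ≤ L0 * (‖x₁ - x₂‖ + ‖y₁ - y₂‖))
    (hfBdd : ∀ x y, ∀ a ∈ A, ‖f x y a‖ ≤ Q0)
    (hctrl : ∀ K : Set (Euc N × Euc M), IsCompact K → ∃ r > 0, ∀ z ∈ K,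
      Metric.ball (0 : Euc M) r ⊆ closure (convexHull ℝ ((fun a => g z.1 z.2 a) '' A)))
 :
    ∀ B : Set (Euc N × Euc M), Bornology.IsBounded B → ∀ S : ℝ, 0 < S →
      ∃ B0 : Set (Euc N × Euc M), Bornology.IsBounded B0 ∧ B ⊆ B0 ∧
        ∀ z ∈ B, ∀ ε : ℝ, 0 < ε →
          ∃ (α : ℝ → Euc k) (ξ : ℝ → Euc N) (η : ℝ → Euc M),
            IsControl A α ∧ IsTrajectory f g ε α ξ η ∧ ξ 0 = z.1 ∧ η 0 = z.2 ∧
            ∀ t, 0 ≤ t → t ≤ S / ε → (ξ t, η t) ∈ B0 := by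
  intro B hB S hS
  refine statement4_general A hAne f g L0 Q0 hfLip hgLip hfBdd ⟨0, fun x y hy ↦ ?_⟩ B hB S hS.le
  obtain ⟨r, hr, hball⟩ := hctrl {(x, y)} isCompact_singleton
  exact exists_mem_image.mp <| exists_inner_neg_of_ball_subset_closure_convexHull hr
    (hball _ rfl) (norm_pos_iff.mp hy)
end

section
/- Under assumptions (H1)–(H3), given x ∈ ℝ^N and y, z ∈ ℝ^M, there exist S0 > 0 and, for each S ≥ S0, a constant P > 0 such that for every ε ∈ (0,1] there are a control α and a trajectory (ξ̄_ε, η̄_ε) of (CD_ε) with (ξ̄_ε(0), η̄_ε(0)) = (x,y) satisfying |η̄_ε(S) − z| ≤ P ε; that is, the prescribed value z of the fast variable can be approximated at any sufficiently large predetermined time S with error O(ε). -/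
open Set MeasureTheory Metric Filter
open scoped RealInnerProductSpace Topology

/-!
Freeze the slow variable at `x` and let the fast variable follow the segment from `y` to `z` at
the constant velocity `v = (z - y) / S`. For large `S` the vector `v` lies in the ball given by
(H3), so along the whole segment it belongs to the closed convex hull of the velocities
`g x (y + t v) a`, `a ∈ A`. Rapid switching between finitely many controls therefore produces a
control along which the running integral of `g x (y + t v) α - v` stays below `ε` on `[0, S]`. On
the true trajectory the slow variable has moved by at most `Q ε S` by time `S`, so both
perturbations of the fast equation are `O(ε)`, and so is the error at time `S` by Gronwall's
inequality.

The switching step is a local-to-global argument: the velocities that are approximate means over all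
short intervals near a given time form a closed convex set, and approximate means on adjacent
intervals concatenate.
-/

section

open scoped NNReal

section SimpleControls

variable {U E : Type*} [NormedAddCommGroup E]

lemma integrable_simpleFunc_apply {Ω : Type*} [MeasurableSpace Ω] {μ : Measure Ω}
    (α : SimpleFunc Ω U) {H : Ω → U → E} (hH : ∀ τ, Integrable (fun s => H s (α τ)) μ) :
    Integrable (fun s => H s (α s)) μ := by
  have h_sum : (fun s => H s (α s)) =
      ∑ a ∈ α.range, (α ⁻¹' {a}).indicator (fun s => H s a) := by
    funext s
    rw [Finset.sum_apply, Finset.sum_eq_single_of_mem _ (α.mem_range_self s)]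
    · simp
    · intro a _ ha
      exact indicator_of_notMem (fun hs => ha hs.symm) _
  rw [h_sum]
  refine integrable_finsetSum' _ fun a ha => ?_
  obtain ⟨τ, rfl⟩ := SimpleFunc.mem_range.mp ha
  exact (hH τ).indicator (α.measurableSet_fiber _)

lemma intervalIntegrable_simpleFunc_apply (α : SimpleFunc ℝ U) {H : ℝ → U → E} {p q : ℝ}
    (hH : ∀ τ, IntervalIntegrable (fun s => H s (α τ)) volume p q) :
    IntervalIntegrable (fun s => H s (α s)) volume p q :=
  ⟨integrable_simpleFunc_apply α fun τ => (hH τ).1,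
    integrable_simpleFunc_apply α fun τ => (hH τ).2⟩

/-- The control equal to `α` up to time `m` and to `β` afterwards. -/
noncomputable def concatControl (m : ℝ) (α β : SimpleFunc ℝ U) : SimpleFunc ℝ U :=
  SimpleFunc.piecewise (Iic m) measurableSet_Iic α β

lemma concatControl_of_le (α β : SimpleFunc ℝ U) {m s : ℝ} (hs : s ≤ m) :
    concatControl m α β s = α s :=
  if_pos hs

lemma concatControl_of_lt (α β : SimpleFunc ℝ U) {m s : ℝ} (hs : m < s) :
    concatControl m α β s = β s :=
  if_neg hs.not_ge

lemma concatControl_mem {A : Set U} {α β : SimpleFunc ℝ U} (hα : ∀ s, α s ∈ A) (hβ : ∀ s, β s ∈ A)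
    (m s : ℝ) : concatControl m α β s ∈ A := by
  rcases le_or_gt s m with hs | hs
  · exact concatControl_of_le α β hs ▸ hα s
  · exact concatControl_of_lt α β hs ▸ hβ s

variable [NormedSpace ℝ E]

lemma integral_concatControl_of_le (α β : SimpleFunc ℝ U) (Φ : ℝ → U → E) {p m t : ℝ}
    (hpm : p ≤ m) (htm : t ≤ m) :
    ∫ s in p..t, Φ s (concatControl m α β s) = ∫ s in p..t, Φ s (α s) :=
  intervalIntegral.integral_congr fun s hs => by
    simp only [concatControl_of_le α β (hs.2.trans (sup_le hpm htm))]

lemma integral_concatControl_of_ge {α β : SimpleFunc ℝ U} {Φ : ℝ → U → E} {p m t : ℝ}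
    (hα : IntervalIntegrable (fun s => Φ s (α s)) volume p m)
    (hβ : IntervalIntegrable (fun s => Φ s (β s)) volume m t) (hpm : p ≤ m) (hmt : m ≤ t) :
    ∫ s in p..t, Φ s (concatControl m α β s) =
      (∫ s in p..m, Φ s (α s)) + ∫ s in m..t, Φ s (β s) := by
  have h_left : EqOn (fun s => Φ s (concatControl m α β s)) (fun s => Φ s (α s)) (uIoo p m) := by
    intro s hs
    rw [uIoo_of_le hpm] at hs
    simp only [concatControl_of_le α β hs.2.le]
  have h_right : EqOn (fun s => Φ s (concatControl m α β s)) (fun s => Φ s (β s)) (uIoo m t) := by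
    intro s hs
    rw [uIoo_of_le hmt] at hs
    simp only [concatControl_of_lt α β hs.1]
  rw [← intervalIntegral.integral_add_adjacent_intervals
      (hα.congr_uIoo h_left.symm) (hβ.congr_uIoo h_right.symm),
    intervalIntegral.integral_congr_uIoo h_left, intervalIntegral.integral_congr_uIoo h_right]

end SimpleControls

section LocalToGlobal

lemma interval_induction {P : ℝ → ℝ → Prop} {a b : ℝ} (hab : a ≤ b)
    (h_concat : ∀ ⦃p m q⦄, p ≤ m → m ≤ q → P p m → P m q → P p q)
    (h_local : ∀ c ∈ Icc a b, ∀ᶠ I : ℝ × ℝ in 𝓝 (c, c), I.1 ≤ I.2 → P I.1 I.2) :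
    P a b := by
  have h_ball : ∀ c : Icc a b, ∃ r > 0, ∀ p ∈ ball (c : ℝ) r, ∀ q ∈ ball (c : ℝ) r,
      p ≤ q → P p q := by
    intro c
    obtain ⟨r, hr, h⟩ := Metric.eventually_nhds_iff_ball.mp (h_local c c.2)
    refine ⟨r, hr, fun p hp q hq hpq => h (p, q) ?_ hpq⟩
    rw [← ball_prod_same]
    exact ⟨hp, hq⟩
  choose r hr hP using h_ball
  obtain ⟨τ, hτ_zero, hτ_mono, ⟨n, hτ_last⟩, hτ_ball⟩ :=
    exists_monotone_Icc_subset_open_cover_Icc hab (c := fun c => ball c (r c))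
      (fun _ => isOpen_ball) fun c _ => mem_iUnion.mpr ⟨c, mem_ball_self (hr c)⟩
  have hP_step : ∀ i, P (τ i) (τ (i + 1)) := by
    intro i
    obtain ⟨c, hc⟩ := hτ_ball i
    have hi : τ i ≤ τ (i + 1) := hτ_mono i.le_succ
    exact hP c _ (hc ⟨le_rfl, hi⟩) _ (hc ⟨hi, le_rfl⟩) hi
  have hP_initial : ∀ i, P a (τ i) := by
    intro i
    induction i with
    | zero =>
      rw [hτ_zero]
      exact (h_local a ⟨le_rfl, hab⟩).self_of_nhds le_rfl
    | succ i ih => exact h_concat (τ i).2.1 (hτ_mono i.le_succ) ih (hP_step i)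
  exact hτ_last n le_rfl ▸ hP_initial n

lemma eventually_forall_mem_Icc {c : ℝ} {p : ℝ → Prop} (h : ∀ᶠ s in 𝓝 c, p s) :
    ∀ᶠ I : ℝ × ℝ in 𝓝 (c, c), ∀ s ∈ Icc I.1 I.2, p s := by
  rw [nhds_prod_eq]
  exact (tendsto_fst.Icc tendsto_snd).eventually h.smallSets

end LocalToGlobal

section Averages

variable {U E : Type*} [NormedAddCommGroup E] {A : Set U} {G : ℝ → U → E}

lemma intervalIntegrable_velocity {α : SimpleFunc ℝ U} (hα : ∀ s, α s ∈ A)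
    (hG : ∀ a ∈ A, Continuous fun s => G s a) (p q : ℝ) :
    IntervalIntegrable (fun s => G s (α s)) volume p q :=
  intervalIntegrable_simpleFunc_apply α fun τ => (hG _ (hα τ)).intervalIntegrable p q

variable [NormedSpace ℝ E]

/-- Up to `δ`, the vector `w` is the mean over `[p, q]` of the velocity `G s (α s)` produced by some
finitely valued control `α`. The bound on the running integral is weaker than the one at the
endpoint, which makes the notion stable both under concatenation of intervals and under convex
combinations of velocities. -/
def HasApproxAverage (A : Set U) (G : ℝ → U → E) (w : E) (δ p q : ℝ) : Prop :=
  ∃ α : SimpleFunc ℝ U, (∀ s, α s ∈ A) ∧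
    (∀ t ∈ Icc p q, ‖∫ s in p..t, (G s (α s) - w)‖ ≤ δ * (1 + (t - p))) ∧
    ‖∫ s in p..q, (G s (α s) - w)‖ ≤ δ * (q - p)

/-- The velocity `w` is produced, to any precision, as a mean over every short interval near the
time `c`. -/
def IsLocalAverage (A : Set U) (G : ℝ → U → E) (c : ℝ) (w : E) : Prop :=
  ∀ δ > 0, ∀ᶠ I : ℝ × ℝ in 𝓝 (c, c), I.1 ≤ I.2 → HasApproxAverage A G w δ I.1 I.2

lemma integral_velocity_concatControl_of_ge {α β : SimpleFunc ℝ U} (hα : ∀ s, α s ∈ A)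
    (hβ : ∀ s, β s ∈ A) (hG : ∀ a ∈ A, Continuous fun s => G s a) (w : E) {p m t : ℝ}
    (hpm : p ≤ m) (hmt : m ≤ t) :
    ∫ s in p..t, (G s (concatControl m α β s) - w) =
      (∫ s in p..m, (G s (α s) - w)) + ∫ s in m..t, (G s (β s) - w) :=
  integral_concatControl_of_ge (Φ := fun s a => G s a - w)
    ((intervalIntegrable_velocity hα hG p m).sub intervalIntegrable_const)
    ((intervalIntegrable_velocity hβ hG m t).sub intervalIntegrable_const) hpm hmt

lemma HasApproxAverage.concat (hG : ∀ a ∈ A, Continuous fun s => G s a) {w : E} {δ p m q : ℝ}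
    (hpm : p ≤ m) (hmq : m ≤ q) (h₁ : HasApproxAverage A G w δ p m)
    (h₂ : HasApproxAverage A G w δ m q) : HasApproxAverage A G w δ p q := by
  obtain ⟨α, hα, hα_run, hα_end⟩ := h₁
  obtain ⟨β, hβ, hβ_run, hβ_end⟩ := h₂
  refine ⟨concatControl m α β, concatControl_mem hα hβ m, fun t ht => ?_, ?_⟩
  · rcases le_total t m with htm | hmt
    · rw [integral_concatControl_of_le α β (fun s a => G s a - w) hpm htm]
      exact hα_run t ⟨ht.1, htm⟩
    · rw [integral_velocity_concatControl_of_ge hα hβ hG w hpm hmt]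
      refine (norm_add_le_of_le hα_end (hβ_run t ⟨hmt, ht.2⟩)).trans_eq ?_
      ring
  · rw [integral_velocity_concatControl_of_ge hα hβ hG w hpm hmq]
    refine (norm_add_le_of_le hα_end hβ_end).trans_eq ?_
    ring

lemma isLocalAverage_apply {c : ℝ} {a : U} (ha : a ∈ A) (hG : ContinuousAt (fun s => G s a) c) :
    IsLocalAverage A G c (G c a) := by
  intro δ hδ
  have h_near : ∀ᶠ s in 𝓝 c, ‖G s a - G c a‖ ≤ δ :=
    (Metric.tendsto_nhds.mp hG δ hδ).mono fun s hs => (dist_eq_norm (G s a) _ ▸ hs).le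
  filter_upwards [eventually_forall_mem_Icc h_near] with ⟨p, q⟩ hI hpq
  have h_bound : ∀ t ∈ Icc p q, ‖∫ s in p..t, (G s a - G c a)‖ ≤ δ * (t - p) := by
    intro t ht
    rw [← abs_of_nonneg (sub_nonneg.mpr ht.1)]
    refine intervalIntegral.norm_integral_le_of_norm_le_const fun s hs => ?_
    rw [uIoc_of_le ht.1] at hs
    exact hI s ⟨hs.1.le, hs.2.trans ht.2⟩
  exact ⟨SimpleFunc.const ℝ a, fun _ => ha,
    fun t ht => (h_bound t ht).trans (by gcongr; linarith), h_bound q ⟨hpq, le_rfl⟩⟩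

variable [CompleteSpace E]

lemma integral_sub_const_eq_add_smul {φ : ℝ → E} {p t : ℝ}
    (hφ : IntervalIntegrable φ volume p t) (w w' : E) :
    ∫ s in p..t, (φ s - w) = (∫ s in p..t, (φ s - w')) + (t - p) • (w' - w) := by
  rw [intervalIntegral.integral_sub hφ intervalIntegrable_const,
    intervalIntegral.integral_sub hφ intervalIntegrable_const,
    intervalIntegral.integral_const, intervalIntegral.integral_const]
  module

lemma norm_integral_sub_const_le {φ : ℝ → E} {p t : ℝ} (hφ : IntervalIntegrable φ volume p t)
    (hpt : p ≤ t) (w w' : E) :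
    ‖∫ s in p..t, (φ s - w)‖ ≤ ‖∫ s in p..t, (φ s - w')‖ + (t - p) * ‖w' - w‖ := by
  rw [integral_sub_const_eq_add_smul hφ w w']
  refine (norm_add_le _ _).trans_eq ?_
  rw [norm_smul, Real.norm_of_nonneg (sub_nonneg.mpr hpt)]

lemma HasApproxAverage.of_norm_sub_le (hG : ∀ a ∈ A, Continuous fun s => G s a) {w w' : E}
    {δ ρ p q : ℝ} (hpq : p ≤ q) (hρ : ‖w' - w‖ ≤ ρ) (h : HasApproxAverage A G w' δ p q) :
    HasApproxAverage A G w (δ + ρ) p q := by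
  obtain ⟨α, hα, h_run, h_end⟩ := h
  have h_shift : ∀ t, p ≤ t → ‖∫ s in p..t, (G s (α s) - w)‖ ≤
      ‖∫ s in p..t, (G s (α s) - w')‖ + (t - p) * ρ := by
    intro t hpt
    have : 0 ≤ t - p := sub_nonneg.mpr hpt
    exact (norm_integral_sub_const_le (intervalIntegrable_velocity hα hG p t) hpt w w').trans
      (by gcongr)
  have hρ_nonneg : 0 ≤ ρ := (norm_nonneg _).trans hρ
  exact ⟨α, hα, fun t ht => by linarith [h_shift t ht.1, h_run t ht],
    by linarith [h_shift q hpq]⟩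

lemma isClosed_setOf_isLocalAverage (hG : ∀ a ∈ A, Continuous fun s => G s a) (c : ℝ) :
    IsClosed {w | IsLocalAverage A G c w} := by
  refine isClosed_of_closure_subset fun w hw δ hδ => ?_
  obtain ⟨w', hw', hdist⟩ := Metric.mem_closure_iff.mp hw (δ / 2) (half_pos hδ)
  filter_upwards [hw' (δ / 2) (half_pos hδ)] with I hI hle
  rw [dist_comm, dist_eq_norm] at hdist
  simpa only [add_halves] using (hI hle).of_norm_sub_le hG hle hdist.le

lemma HasApproxAverage.convex_concat (hG : ∀ a ∈ A, Continuous fun s => G s a)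
    {w₁ w₂ w : E} {δ p m q : ℝ} (hpm : p ≤ m) (hmq : m ≤ q)
    (hw : (m - p) • (w₁ - w) + (q - m) • (w₂ - w) = 0)
    (h_short : (q - p) * (‖w₁ - w‖ + ‖w₂ - w‖) ≤ δ)
    (h₁ : HasApproxAverage A G w₁ δ p m) (h₂ : HasApproxAverage A G w₂ δ m q) :
    HasApproxAverage A G w (2 * δ) p q := by
  obtain ⟨α, hα, hα_run, hα_end⟩ := h₁
  obtain ⟨β, hβ, hβ_run, hβ_end⟩ := h₂
  have hα_int := intervalIntegrable_velocity hα hG p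
  have hβ_int := intervalIntegrable_velocity hβ hG m
  have hδ : 0 ≤ δ :=
    (mul_nonneg (sub_nonneg.mpr (hpm.trans hmq)) (by positivity)).trans h_short
  have h_drift : ∀ {a b}, a ≤ q - p → b ≤ q - p → a * ‖w₁ - w‖ + b * ‖w₂ - w‖ ≤ δ := by
    intro a b ha hb
    refine le_trans ?_ h_short
    rw [mul_add]
    gcongr
  refine ⟨concatControl m α β, concatControl_mem hα hβ m, fun t ⟨hpt, htq⟩ => ?_, ?_⟩
  · have hδ_time : 0 ≤ δ * (t - p) := mul_nonneg hδ (sub_nonneg.mpr hpt)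
    rcases le_total t m with htm | hmt
    · rw [integral_concatControl_of_le α β (fun s a => G s a - w) hpm htm]
      have h_drift' := h_drift (a := t - p) (b := 0) (by linarith) (by linarith)
      linarith [norm_integral_sub_const_le (hα_int t) hpt w w₁, hα_run t ⟨hpt, htm⟩]
    · rw [integral_velocity_concatControl_of_ge hα hβ hG w hpm hmt]
      have h_drift' := h_drift (a := m - p) (b := t - m) (by linarith) (by linarith)
      have h_run := hβ_run t ⟨hmt, htq⟩
      refine (norm_add_le_of_le (norm_integral_sub_const_le (hα_int m) hpm w w₁)
        (norm_integral_sub_const_le (hβ_int t) hmt w w₂)).trans ?_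
      linarith
  · rw [integral_velocity_concatControl_of_ge hα hβ hG w hpm hmq,
      integral_sub_const_eq_add_smul (hα_int m) w w₁,
      integral_sub_const_eq_add_smul (hβ_int q) w w₂, add_add_add_comm, hw, add_zero]
    have : 0 ≤ δ * (q - p) := mul_nonneg hδ (sub_nonneg.mpr (hpm.trans hmq))
    refine (norm_add_le_of_le hα_end hβ_end).trans ?_
    linarith

lemma convex_setOf_isLocalAverage (hG : ∀ a ∈ A, Continuous fun s => G s a) (c : ℝ) :
    Convex ℝ {w | IsLocalAverage A G c w} := by
  intro w₁ hw₁ w₂ hw₂ l₁ l₂ hl₁ hl₂ hl δ hδ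
  set w := l₁ • w₁ + l₂ • w₂
  let m : ℝ × ℝ → ℝ := fun I => I.1 + l₁ * (I.2 - I.1)
  have hm : Continuous m := by fun_prop
  have h_first : Tendsto (fun I : ℝ × ℝ => (I.1, m I)) (𝓝 (c, c)) (𝓝 (c, c)) :=
    (continuous_fst.prodMk hm).tendsto' _ _ (by simp [m])
  have h_second : Tendsto (fun I : ℝ × ℝ => (m I, I.2)) (𝓝 (c, c)) (𝓝 (c, c)) :=
    (hm.prodMk continuous_snd).tendsto' _ _ (by simp [m])
  have h_short : ∀ᶠ I : ℝ × ℝ in 𝓝 (c, c),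
      (I.2 - I.1) * (‖w₁ - w‖ + ‖w₂ - w‖) < δ / 2 := by
    have h_cont : Continuous fun I : ℝ × ℝ => (I.2 - I.1) * (‖w₁ - w‖ + ‖w₂ - w‖) := by fun_prop
    exact h_cont.continuousAt.eventually_lt continuousAt_const (by simpa using hδ)
  filter_upwards [h_first.eventually (hw₁ (δ / 2) (half_pos hδ)),
    h_second.eventually (hw₂ (δ / 2) (half_pos hδ)), h_short] with ⟨p, q⟩ h₁ h₂ hI hpq
  have hm_sub : m (p, q) - p = l₁ * (q - p) := by simp only [m]; ring
  have hsub_m : q - m (p, q) = l₂ * (q - p) := by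
    rw [← eq_sub_iff_add_eq'] at hl
    simp only [m, hl]
    ring
  have hpm : p ≤ m (p, q) := by nlinarith
  have hmq : m (p, q) ≤ q := by nlinarith
  have hw : (m (p, q) - p) • (w₁ - w) + (q - m (p, q)) • (w₂ - w) = 0 := by
    calc (m (p, q) - p) • (w₁ - w) + (q - m (p, q)) • (w₂ - w)
        = ((1 - (l₁ + l₂)) * (q - p)) • w := by
          rw [hm_sub, hsub_m]
          simp only [w]
          module
      _ = 0 := by rw [hl, sub_self, zero_mul, zero_smul]
  simpa only [mul_div_cancel₀ δ two_ne_zero] using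
    HasApproxAverage.convex_concat hG hpm hmq hw hI.le (h₁ hpm) (h₂ hmq)

lemma isLocalAverage_of_mem_closure_convexHull (hG : ∀ a ∈ A, Continuous fun s => G s a) {c : ℝ}
    {w : E} (hw : w ∈ closure (convexHull ℝ (G c '' A))) : IsLocalAverage A G c w := by
  refine closure_minimal (convexHull_min ?_ (convex_setOf_isLocalAverage hG c))
    (isClosed_setOf_isLocalAverage hG c) hw
  rintro _ ⟨a, ha, rfl⟩
  exact isLocalAverage_apply ha (hG a ha).continuousAt

theorem exists_control_norm_integral_sub_le (hG : ∀ a ∈ A, Continuous fun s => G s a) {a b : ℝ}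
    (hab : a ≤ b) {w : E} (hw : ∀ c ∈ Icc a b, w ∈ closure (convexHull ℝ (G c '' A))) {δ : ℝ}
    (hδ : 0 < δ) :
    ∃ α : SimpleFunc ℝ U, (∀ s, α s ∈ A) ∧
      ∀ t ∈ Icc a b, ‖∫ s in a..t, (G s (α s) - w)‖ ≤ δ := by
  have h_len : 0 < 1 + (b - a) := by linarith
  obtain ⟨α, hα, h_run, -⟩ := interval_induction (P := HasApproxAverage A G w _) hab
    (fun p m q => HasApproxAverage.concat hG)
    fun c hc => isLocalAverage_of_mem_closure_convexHull hG (hw c hc) _ (div_pos hδ h_len)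
  refine ⟨α, hα, fun t ht => (h_run t ht).trans ?_⟩
  calc δ / (1 + (b - a)) * (1 + (t - a)) ≤ δ / (1 + (b - a)) * (1 + (b - a)) := by
        gcongr
        exact ht.2
    _ = δ := div_mul_cancel₀ δ h_len.ne'

end Averages

section Caratheodory

open scoped BoundedContinuousFunction

variable {E : Type*} [NormedAddCommGroup E] [NormedSpace ℝ E]

lemma norm_exp_smul_integral_le {φ : ℝ → E} {c K T : ℝ} (hc : 0 < c) (hK : 0 ≤ K) (hT : 0 ≤ T)
    (hφ : ∀ s ∈ Ioc 0 T, ‖φ s‖ ≤ K * Real.exp (c * s)) :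
    ‖Real.exp (-(c * T)) • ∫ s in (0 : ℝ)..T, φ s‖ ≤ K / c := by
  have h_integral : ∫ s in (0 : ℝ)..T, K * Real.exp (c * s) =
      K / c * (Real.exp (c * T) - 1) := by
    rw [intervalIntegral.integral_const_mul, intervalIntegral.integral_comp_mul_left _ hc.ne',
      integral_exp, mul_zero, Real.exp_zero, smul_eq_mul]
    ring
  rw [norm_smul, Real.norm_of_nonneg (Real.exp_pos _).le]
  calc Real.exp (-(c * T)) * ‖∫ s in (0 : ℝ)..T, φ s‖
      ≤ Real.exp (-(c * T)) * (K / c * (Real.exp (c * T) - 1)) := by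
        rw [← h_integral]
        gcongr
        exact intervalIntegral.norm_integral_le_of_norm_le hT (.of_forall hφ)
          (Continuous.intervalIntegrable (by fun_prop) _ _)
    _ = K / c * (1 - Real.exp (-(c * T))) := by
        rw [Real.exp_neg]
        field_simp
    _ ≤ K / c := mul_le_of_le_one_right (by positivity) (sub_le_self _ (Real.exp_pos _).le)

/-- The Picard operator of `u' = F t u`, `u 0 = u₀`, conjugated by the weight `exp (c * t)`: its
fixed points `w` correspond to the solutions `u t = exp (c * t) • w t` on `[0, ∞)`. For large `c` it
is a contraction of the bounded continuous functions (Bielecki's norm). Negative times are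
truncated to `0`. -/
noncomputable def weightedPicard (F : ℝ → E → E) (c : ℝ) (u₀ : E) (w : ℝ → E) (t : ℝ) : E :=
  Real.exp (-(c * max t 0)) •
    (u₀ + ∫ s in (0 : ℝ)..max t 0, F s (Real.exp (c * s) • w s))

variable {F : ℝ → E → E} {L : ℝ≥0} {c : ℝ}

lemma continuous_weightedPicard
    (hF_int : ∀ u : ℝ → E, Continuous u → ∀ a b,
      IntervalIntegrable (fun s => F s (u s)) volume a b)
    (u₀ : E) (w : ℝ →ᵇ E) : Continuous (weightedPicard F c u₀ w) := by
  have h_primitive :=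
    intervalIntegral.continuous_primitive (hF_int (fun s => Real.exp (c * s) • w s) (by fun_prop)) 0
  have h_trunc : Continuous fun t : ℝ => max t 0 := by fun_prop
  exact (by fun_prop : Continuous fun t : ℝ => Real.exp (-(c * max t 0))).smul
    (continuous_const.add (h_primitive.comp h_trunc))

lemma norm_weightedPicard_le {C : ℝ} (hc : 0 < c) (hF_lip : ∀ s, LipschitzWith L (F s))
    (hF_zero : ∀ s, ‖F s 0‖ ≤ C) (u₀ : E) (w : ℝ →ᵇ E) (t : ℝ) :
    ‖weightedPicard F c u₀ w t‖ ≤ ‖u₀‖ + (C + L * ‖w‖) / c := by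
  have hC : 0 ≤ C := (norm_nonneg _).trans (hF_zero 0)
  have hT : 0 ≤ max t 0 := le_max_right t 0
  have h_field : ∀ s ∈ Ioc 0 (max t 0),
      ‖F s (Real.exp (c * s) • w s)‖ ≤ (C + L * ‖w‖) * Real.exp (c * s) := by
    intro s hs
    have h_exp : 1 ≤ Real.exp (c * s) := Real.one_le_exp (mul_nonneg hc.le hs.1.le)
    calc ‖F s (Real.exp (c * s) • w s)‖
        ≤ ‖F s 0‖ + ‖F s (Real.exp (c * s) • w s) - F s 0‖ := norm_le_norm_add_norm_sub' _ _
      _ ≤ C * Real.exp (c * s) + L * (Real.exp (c * s) * ‖w‖) := by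
          refine add_le_add ((hF_zero s).trans (le_mul_of_one_le_right hC h_exp)) ?_
          refine ((hF_lip s).norm_sub_le _ _).trans ?_
          rw [sub_zero, norm_smul, Real.norm_of_nonneg (Real.exp_pos _).le]
          gcongr
          exact w.norm_coe_le_norm s
      _ = (C + L * ‖w‖) * Real.exp (c * s) := by ring
  rw [weightedPicard, smul_add]
  refine norm_add_le_of_le ?_ (norm_exp_smul_integral_le hc (by positivity) hT h_field)
  rw [norm_smul, Real.norm_of_nonneg (Real.exp_pos _).le]
  exact mul_le_of_le_one_left (norm_nonneg _)
    (Real.exp_le_one_iff.mpr (neg_nonpos.mpr (mul_nonneg hc.le hT)))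

lemma dist_weightedPicard_le (hc : 0 < c)
    (hF_int : ∀ u : ℝ → E, Continuous u → ∀ a b,
      IntervalIntegrable (fun s => F s (u s)) volume a b)
    (hF_lip : ∀ s, LipschitzWith L (F s)) (u₀ : E) (w₁ w₂ : ℝ →ᵇ E) (t : ℝ) :
    dist (weightedPicard F c u₀ w₁ t) (weightedPicard F c u₀ w₂ t) ≤ L * dist w₁ w₂ / c := by
  rw [dist_eq_norm, weightedPicard, weightedPicard, ← smul_sub, add_sub_add_left_eq_sub,
    ← intervalIntegral.integral_sub (hF_int _ (by fun_prop) _ _) (hF_int _ (by fun_prop) _ _)]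
  refine norm_exp_smul_integral_le hc (by positivity) (le_max_right t 0) fun s _ => ?_
  calc ‖F s (Real.exp (c * s) • w₁ s) - F s (Real.exp (c * s) • w₂ s)‖
      ≤ L * ‖Real.exp (c * s) • w₁ s - Real.exp (c * s) • w₂ s‖ := (hF_lip s).norm_sub_le _ _
    _ = L * (Real.exp (c * s) * dist (w₁ s) (w₂ s)) := by
        rw [← smul_sub, norm_smul, Real.norm_of_nonneg (Real.exp_pos _).le, dist_eq_norm]
    _ ≤ L * (Real.exp (c * s) * dist w₁ w₂) := by
        gcongr
        exact BoundedContinuousFunction.dist_coe_le_dist s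
    _ = L * dist w₁ w₂ * Real.exp (c * s) := by ring

variable [CompleteSpace E]

theorem exists_continuous_eq_add_integral {C : ℝ}
    (hF_int : ∀ u : ℝ → E, Continuous u → ∀ a b,
      IntervalIntegrable (fun s => F s (u s)) volume a b)
    (hF_lip : ∀ s, LipschitzWith L (F s)) (hF_zero : ∀ s, ‖F s 0‖ ≤ C) (u₀ : E) :
    ∃ u : ℝ → E, Continuous u ∧ ∀ t, 0 ≤ t → u t = u₀ + ∫ s in (0 : ℝ)..t, F s (u s) := by
  let c : ℝ := 2 * L + 1
  have hc : 0 < c := by positivity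
  let Φ : (ℝ →ᵇ E) → ℝ →ᵇ E := fun w =>
    BoundedContinuousFunction.ofNormedAddCommGroup (weightedPicard F c u₀ w)
      (continuous_weightedPicard hF_int u₀ w) _ (norm_weightedPicard_le hc hF_lip hF_zero u₀ w)
  have hΦ : ContractingWith (1 / 2) Φ := by
    refine ⟨NNReal.half_lt_self one_ne_zero, LipschitzWith.of_dist_le_mul fun w₁ w₂ => ?_⟩
    refine (BoundedContinuousFunction.dist_le (by positivity)).mpr fun t => ?_
    refine (dist_weightedPicard_le hc hF_int hF_lip u₀ w₁ w₂ t).trans ?_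
    rw [div_le_iff₀ hc]
    push_cast
    linarith [dist_nonneg (x := w₁) (y := w₂)]
  obtain ⟨w, hw⟩ : ∃ w, Φ w = w := ⟨_, hΦ.fixedPoint_isFixedPt⟩
  refine ⟨fun t => Real.exp (c * t) • w t, by fun_prop, fun t ht => ?_⟩
  have hwt : w t = weightedPicard F c u₀ w t := (DFunLike.congr_fun hw t).symm
  change Real.exp (c * t) • w t = _
  rw [hwt, weightedPicard, max_eq_left ht, smul_smul, ← Real.exp_add, add_neg_cancel,
    Real.exp_zero, one_smul]

theorem exists_continuous_controlled_solution {U : Type*} {A : Set U} {V : E → U → E}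
    (hV : ∀ a ∈ A, LipschitzWith L fun u => V u a) {α : SimpleFunc ℝ U} (hα : ∀ s, α s ∈ A)
    (u₀ : E) :
    ∃ u : ℝ → E, Continuous u ∧ ∀ t, 0 ≤ t → u t = u₀ + ∫ s in (0 : ℝ)..t, V (u s) (α s) := by
  obtain ⟨C, hC⟩ := (α.map fun a => V 0 a).exists_forall_norm_le
  exact exists_continuous_eq_add_integral (F := fun s u => V u (α s))
    (fun u hu => intervalIntegrable_velocity (G := fun s a => V (u s) a) hα fun a ha =>
      (hV a ha).continuous.comp hu)
    (fun s => hV _ (hα s)) hC u₀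

end Caratheodory

section Gronwall

theorem le_mul_exp_of_le_add_mul_integral {e : ℝ → ℝ} {D L S : ℝ} (hL : 0 ≤ L)
    (he : ContinuousOn e (Icc 0 S))
    (h : ∀ t ∈ Icc 0 S, e t ≤ D + L * ∫ s in (0 : ℝ)..t, e s) {t : ℝ} (ht : t ∈ Icc 0 S) :
    e t ≤ D * Real.exp (L * t) := by
  have hS : 0 ≤ S := ht.1.trans ht.2
  have h_cont : ContinuousOn (fun t => ∫ s in (0 : ℝ)..t, e s) (Icc 0 S) := by
    have h_int : IntegrableOn e (Icc 0 S) := he.integrableOn_Icc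
    rw [← uIcc_of_le hS] at h_int ⊢
    exact intervalIntegral.continuousOn_primitive_interval h_int
  have h_deriv : ∀ x ∈ Ico 0 S,
      HasDerivWithinAt (fun t => ∫ s in (0 : ℝ)..t, e s) (e x) (Ici x) x := by
    intro x hx
    have h_nhds : 𝓝[>] x ≤ 𝓝[Icc 0 S] x := nhdsWithin_le_of_mem (Icc_mem_nhdsGT_of_mem hx)
    have h_int_x : IntervalIntegrable e volume 0 x :=
      (he.mono (Icc_subset_Icc_right hx.2.le)).intervalIntegrable_of_Icc hx.1
    exact intervalIntegral.integral_hasDerivWithinAt_right h_int_x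
      ((he.stronglyMeasurableAtFilter_nhdsWithin measurableSet_Icc x).filter_mono h_nhds)
      ((he x ⟨hx.1, hx.2.le⟩).mono_left h_nhds)
  have h_primitive : ∫ s in (0 : ℝ)..t, e s ≤ gronwallBound 0 L D t := by
    simpa only [sub_zero] using le_gronwallBound_of_liminf_deriv_right_le h_cont
      (fun x hx _ hr => (h_deriv x hx).liminf_right_slope_le hr)
      intervalIntegral.integral_same.le
      (fun x hx => (h x ⟨hx.1, hx.2.le⟩).trans_eq (add_comm _ _)) t ht
  refine (h t ht).trans ((by gcongr : _ ≤ D + L * gronwallBound 0 L D t).trans_eq ?_)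
  rcases eq_or_ne L 0 with rfl | hL_ne
  · simp
  · rw [gronwallBound_of_K_ne_0 hL_ne]
    field_simp
    ring

end Gronwall

section SlowFast

variable {X Y U : Type*} [NormedAddCommGroup X] [NormedAddCommGroup Y] {A : Set U}

lemma lipschitzWith_uncurry_of_norm_sub_le_s5 {Z : Type*} [NormedAddCommGroup Z] {φ : X → Y → Z}
    {K : ℝ≥0} (h : ∀ x₁ x₂ y₁ y₂, ‖φ x₁ y₁ - φ x₂ y₂‖ ≤ K * (‖x₁ - x₂‖ + ‖y₁ - y₂‖)) :
    LipschitzWith (2 * K) fun p : X × Y => φ p.1 p.2 := by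
  refine lipschitzWith_iff_norm_sub_le.mpr fun p q => (h _ _ _ _).trans ?_
  calc K * (‖p.1 - q.1‖ + ‖p.2 - q.2‖) ≤ K * (‖p - q‖ + ‖p - q‖) := by
        gcongr
        · exact norm_fst_le (p - q)
        · exact norm_snd_le (p - q)
    _ = (2 * K : ℝ≥0) * ‖p - q‖ := by
        push_cast
        ring

variable [NormedSpace ℝ X] [NormedSpace ℝ Y]

/-- The integral form of the controlled slow-fast system `ξ' = ε f(ξ, η, α)`, `η' = g(ξ, η, α)` on
`[0, ∞)`: the relation `IsTrajectory` for arbitrary normed state spaces and control values. -/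
def IsSlowFastTrajectory (f : X → Y → U → X) (g : X → Y → U → Y) (ε : ℝ) (α : ℝ → U)
    (ξ : ℝ → X) (η : ℝ → Y) : Prop :=
  (∀ t, 0 ≤ t → IntervalIntegrable (fun s => f (ξ s) (η s) (α s)) volume 0 t) ∧
  (∀ t, 0 ≤ t → IntervalIntegrable (fun s => g (ξ s) (η s) (α s)) volume 0 t) ∧
  (∀ t, 0 ≤ t → ξ t = ξ 0 + ε • ∫ s in (0 : ℝ)..t, f (ξ s) (η s) (α s)) ∧
  (∀ t, 0 ≤ t → η t = η 0 + ∫ s in (0 : ℝ)..t, g (ξ s) (η s) (α s))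

variable {f : X → Y → U → X} {g : X → Y → U → Y} {L : ℝ≥0} {ε : ℝ}

theorem exists_isSlowFastTrajectory [CompleteSpace X] [CompleteSpace Y]
    (hf : ∀ a ∈ A, LipschitzWith L fun p : X × Y => f p.1 p.2 a)
    (hg : ∀ a ∈ A, LipschitzWith L fun p : X × Y => g p.1 p.2 a)
    {α : SimpleFunc ℝ U} (hα : ∀ s, α s ∈ A) (ε : ℝ) (x : X) (y : Y) :
    ∃ ξ η, IsSlowFastTrajectory f g ε α ξ η ∧ ξ 0 = x ∧ η 0 = y := by
  obtain ⟨u, hu, hu_eq⟩ := exists_continuous_controlled_solution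
    (V := fun p a => (ε • f p.1 p.2 a, g p.1 p.2 a))
    (fun a ha => ((lipschitzWith_smul ε).comp (hf a ha)).prodMk (hg a ha)) hα (x, y)
  have hu_zero : u 0 = (x, y) := by simpa using hu_eq 0 le_rfl
  have hf_int := intervalIntegrable_velocity (G := fun s a => f (u s).1 (u s).2 a) hα
    (fun a ha => (hf a ha).continuous.comp hu) 0
  have hg_int := intervalIntegrable_velocity (G := fun s a => g (u s).1 (u s).2 a) hα
    (fun a ha => (hg a ha).continuous.comp hu) 0
  have h_components : ∀ t, 0 ≤ t → u t = (x + ε • ∫ s in (0 : ℝ)..t, f (u s).1 (u s).2 (α s),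
      y + ∫ s in (0 : ℝ)..t, g (u s).1 (u s).2 (α s)) := by
    intro t ht
    rw [hu_eq t ht, intervalIntegral.integral_of_le ht,
      integral_pair (f := fun s => ε • f (u s).1 (u s).2 (α s)) ((hf_int t).1.smul ε) (hg_int t).1,
      integral_smul, Prod.mk_add_mk, intervalIntegral.integral_of_le ht,
      intervalIntegral.integral_of_le ht]
  refine ⟨fun t => (u t).1, fun t => (u t).2, ⟨fun t _ => hf_int t, fun t _ => hg_int t,
    fun t ht => ?_, fun t ht => ?_⟩, congrArg Prod.fst hu_zero, congrArg Prod.snd hu_zero⟩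
  · simpa only [hu_zero] using congrArg Prod.fst (h_components t ht)
  · simpa only [hu_zero] using congrArg Prod.snd (h_components t ht)

namespace IsSlowFastTrajectory

variable {α : ℝ → U} {ξ : ℝ → X} {η : ℝ → Y}

lemma norm_slow_sub_le (h : IsSlowFastTrajectory f g ε α ξ η) {Q : ℝ}
    (hf : ∀ s, ‖f (ξ s) (η s) (α s)‖ ≤ Q) {t : ℝ} (ht : 0 ≤ t) :
    ‖ξ t - ξ 0‖ ≤ |ε| * (Q * t) := by
  rw [h.2.2.1 t ht, add_sub_cancel_left, norm_smul, Real.norm_eq_abs]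
  gcongr
  simpa only [sub_zero, abs_of_nonneg ht] using
    intervalIntegral.norm_integral_le_of_norm_le_const (a := 0) (b := t) fun s _ => hf s

lemma continuousOn_fast (h : IsSlowFastTrajectory f g ε α ξ η) (S : ℝ) :
    ContinuousOn η (Icc 0 S) := by
  rcases lt_or_ge S 0 with hS | hS
  · simp [Icc_eq_empty hS.not_ge]
  have h_primitive : ContinuousOn
      (fun t => η 0 + ∫ s in (0 : ℝ)..t, g (ξ s) (η s) (α s)) (uIcc 0 S) :=
    continuousOn_const.add (intervalIntegral.continuousOn_primitive_interval'
      (h.2.1 S hS) left_mem_uIcc)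
  rw [uIcc_of_le hS] at h_primitive
  exact h_primitive.congr fun t ht => h.2.2.2 t ht.1

lemma fast_sub_eq_integral_add_integral [CompleteSpace Y]
    (h : IsSlowFastTrajectory f g ε α ξ η) {φ : ℝ → Y} {t : ℝ} (ht : 0 ≤ t)
    (hφ : IntervalIntegrable φ volume 0 t) (v : Y) :
    η t - (η 0 + t • v) =
      (∫ s in (0 : ℝ)..t, (g (ξ s) (η s) (α s) - φ s)) + ∫ s in (0 : ℝ)..t, (φ s - v) := by
  rw [h.2.2.2 t ht, intervalIntegral.integral_sub (h.2.1 t ht) hφ,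
    intervalIntegral.integral_sub hφ intervalIntegrable_const, intervalIntegral.integral_const,
    sub_zero]
  abel

theorem norm_fast_sub_le [CompleteSpace Y] (h : IsSlowFastTrajectory f g ε α ξ η)
    (hg : ∀ s, LipschitzWith L fun p : X × Y => g p.1 p.2 (α s)) {x : X} {v : Y} {S δ ρ : ℝ}
    (hS : 0 ≤ S)
    (h_int : IntervalIntegrable (fun s => g x (η 0 + s • v) (α s)) volume 0 S)
    (h_avg : ∀ t ∈ Icc 0 S, ‖∫ s in (0 : ℝ)..t, (g x (η 0 + s • v) (α s) - v)‖ ≤ δ)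
    (h_slow : ∀ t ∈ Icc 0 S, ‖ξ t - x‖ ≤ ρ) :
    ‖η S - (η 0 + S • v)‖ ≤ (δ + L * ρ * S) * Real.exp (L * S) := by
  set e : ℝ → ℝ := fun t => ‖η t - (η 0 + t • v)‖
  have he : ContinuousOn e (Icc 0 S) := ((h.continuousOn_fast S).sub (by fun_prop)).norm
  have hρ : 0 ≤ ρ := (norm_nonneg _).trans (h_slow 0 ⟨le_rfl, hS⟩)
  have h_lip : ∀ s ∈ Icc 0 S,
      ‖g (ξ s) (η s) (α s) - g x (η 0 + s • v) (α s)‖ ≤ L * ρ + L * e s := by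
    intro s hs
    refine ((hg s).norm_sub_le (ξ s, η s) (x, η 0 + s • v)).trans ?_
    rw [← mul_add]
    gcongr
    exact max_le ((h_slow s hs).trans (le_add_of_nonneg_right (norm_nonneg _)))
      (le_add_of_nonneg_left hρ)
  refine le_mul_exp_of_le_add_mul_integral (e := e) L.2 he (fun t ht => ?_) ⟨hS, le_rfl⟩
  have he_int : IntervalIntegrable e volume 0 t :=
    (he.mono (Icc_subset_Icc_right ht.2)).intervalIntegrable_of_Icc ht.1
  have h_diff : ‖∫ s in (0 : ℝ)..t, (g (ξ s) (η s) (α s) - g x (η 0 + s • v) (α s))‖ ≤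
      L * ρ * t + L * ∫ s in (0 : ℝ)..t, e s := by
    refine (intervalIntegral.norm_integral_le_of_norm_le ht.1
      (.of_forall fun s hs => h_lip s ⟨hs.1.le, hs.2.trans ht.2⟩)
      (intervalIntegrable_const.add (he_int.const_mul _))).trans_eq ?_
    rw [intervalIntegral.integral_add intervalIntegrable_const (he_int.const_mul _),
      intervalIntegral.integral_const, intervalIntegral.integral_const_mul, sub_zero,
      smul_eq_mul, mul_comm t]
  have h_int_t : IntervalIntegrable (fun s => g x (η 0 + s • v) (α s)) volume 0 t :=
    h_int.mono_set (uIcc_subset_uIcc_left (by rwa [uIcc_of_le hS]))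
  calc e t ≤ (L * ρ * t + L * ∫ s in (0 : ℝ)..t, e s) + δ := by
        simp only [e]
        rw [h.fast_sub_eq_integral_add_integral ht.1 h_int_t v]
        exact norm_add_le_of_le h_diff (h_avg t ht)
    _ ≤ (L * ρ * S + L * ∫ s in (0 : ℝ)..t, e s) + δ := by
        gcongr
        exact ht.2
    _ = δ + L * ρ * S + L * ∫ s in (0 : ℝ)..t, e s := by ring

end IsSlowFastTrajectory

variable [CompleteSpace X] [CompleteSpace Y]

theorem exists_control_norm_fast_sub_le {Q : ℝ≥0}
    (hf : ∀ a ∈ A, LipschitzWith L fun p : X × Y => f p.1 p.2 a)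
    (hg : ∀ a ∈ A, LipschitzWith L fun p : X × Y => g p.1 p.2 a)
    (hf_bdd : ∀ x y, ∀ a ∈ A, ‖f x y a‖ ≤ Q) {x : X} {y v : Y} {S : ℝ} (hS : 0 ≤ S)
    (hv : ∀ t ∈ Icc 0 S, v ∈ closure (convexHull ℝ (g x (y + t • v) '' A))) (hε : 0 < ε) :
    ∃ (α : SimpleFunc ℝ U) (ξ : ℝ → X) (η : ℝ → Y), (∀ t, α t ∈ A) ∧
      IsSlowFastTrajectory f g ε α ξ η ∧ ξ 0 = x ∧ η 0 = y ∧
      ‖η S - (y + S • v)‖ ≤ (1 + L * Q * S ^ 2) * Real.exp (L * S) * ε := by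
  have h_cont : ∀ a ∈ A, Continuous fun s : ℝ => g x (y + s • v) a := fun a ha =>
    (hg a ha).continuous.comp (by fun_prop : Continuous fun s : ℝ => (x, y + s • v))
  obtain ⟨α, hα, h_avg⟩ :=
    exists_control_norm_integral_sub_le (G := fun s => g x (y + s • v)) h_cont hS hv hε
  obtain ⟨ξ, η, h, rfl, rfl⟩ := exists_isSlowFastTrajectory hf hg hα ε x y
  have h_slow : ∀ t ∈ Icc 0 S, ‖ξ t - ξ 0‖ ≤ ε * (Q * S) := by
    intro t ht
    refine (h.norm_slow_sub_le (fun s => hf_bdd _ _ _ (hα s)) ht.1).trans ?_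
    rw [abs_of_pos hε]
    gcongr
    exact ht.2
  refine ⟨α, ξ, η, hα, h, rfl, rfl, ?_⟩
  refine (h.norm_fast_sub_le (fun s => hg _ (hα s)) hS
    (intervalIntegrable_velocity hα h_cont 0 S) h_avg h_slow).trans_eq ?_
  ring

theorem statement5_general {Q : ℝ≥0}
    (hf : ∀ a ∈ A, LipschitzWith L fun p : X × Y => f p.1 p.2 a)
    (hg : ∀ a ∈ A, LipschitzWith L fun p : X × Y => g p.1 p.2 a)
    (hf_bdd : ∀ x y, ∀ a ∈ A, ‖f x y a‖ ≤ Q)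
    (h_ctrl : ∀ K : Set (X × Y), IsCompact K → ∃ r > 0, ∀ p ∈ K,
      ball (0 : Y) r ⊆ closure (convexHull ℝ (g p.1 p.2 '' A)))
    (x : X) (y z : Y) :
    ∃ S₀ > (0 : ℝ), ∀ S, S₀ ≤ S → ∃ P > (0 : ℝ), ∀ ε > 0,
      ∃ (α : SimpleFunc ℝ U) (ξ : ℝ → X) (η : ℝ → Y), (∀ t, α t ∈ A) ∧
        IsSlowFastTrajectory f g ε α ξ η ∧ ξ 0 = x ∧ η 0 = y ∧ ‖η S - z‖ ≤ P * ε := by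
  have h_segment : IsCompact (segment ℝ y z) :=
    convexHull_pair (𝕜 := ℝ) y z ▸ (toFinite {y, z}).isCompact_convexHull ℝ
  obtain ⟨r, hr, h_ball⟩ := h_ctrl ({x} ×ˢ segment ℝ y z) (isCompact_singleton.prod h_segment)
  refine ⟨‖z - y‖ / r + 1, by positivity, fun S hS => ?_⟩
  have hS_pos : 0 < S := lt_of_lt_of_le (by positivity) hS
  let v : Y := S⁻¹ • (z - y)
  have hv_ball : v ∈ ball (0 : Y) r := by
    have h_time : ‖z - y‖ / r < S := by linarith
    rwa [mem_ball_zero_iff, norm_smul, norm_inv, Real.norm_of_nonneg hS_pos.le,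
      inv_mul_lt_iff₀ hS_pos, ← div_lt_iff₀ hr]
  have hv_end : y + S • v = z := by
    rw [smul_inv_smul₀ hS_pos.ne', add_sub_cancel]
  have hv_segment : ∀ t ∈ Icc 0 S, y + t • v ∈ segment ℝ y z := by
    intro t ht
    rw [segment_eq_image']
    exact ⟨t / S, ⟨div_nonneg ht.1 hS_pos.le, div_le_one_of_le₀ ht.2 hS_pos.le⟩,
      by simp only [v, smul_smul, div_eq_mul_inv]⟩
  refine ⟨(1 + L * Q * S ^ 2) * Real.exp (L * S), by positivity, fun ε hε => ?_⟩
  rw [← hv_end]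
  exact exists_control_norm_fast_sub_le hf hg hf_bdd hS_pos.le
    (fun t ht => h_ball (x, y + t • v) ⟨rfl, hv_segment t ht⟩ hv_ball) hε

end SlowFast

end

theorem statement5
    {N M k : ℕ} (A : Set (Euc k)) (hA : IsCompact A) (hAne : A.Nonempty)
    (f : Euc N → Euc M → Euc k → Euc N) (g : Euc N → Euc M → Euc k → Euc M)
    (L0 Q0 : ℝ) (hL0 : 0 < L0) (hQ0 : 0 < Q0)
    (hfLip : ∀ (x₁ x₂ : Euc N) (y₁ y₂ : Euc M), ∀ a ∈ A,
      ‖f x₁ y₁ a - f x₂ y₂ a‖ ≤ L0 * (‖x₁ - x₂‖ + ‖y₁ - y₂‖))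
    (hgLip : ∀ (x₁ x₂ : Euc N) (y₁ y₂ : Euc M), ∀ a ∈ A,
      ‖g x₁ y₁ a - g x₂ y₂ a‖ ≤ L0 * (‖x₁ - x₂‖ + ‖y₁ - y₂‖))
    (hfBdd : ∀ x y, ∀ a ∈ A, ‖f x y a‖ ≤ Q0)
    (hctrl : ∀ K : Set (Euc N × Euc M), IsCompact K → ∃ r > 0, ∀ z ∈ K,
      Metric.ball (0 : Euc M) r ⊆ closure (convexHull ℝ ((fun a => g z.1 z.2 a) '' A)))
 :
    ∀ (x : Euc N) (y z : Euc M), ∃ S0 > (0:ℝ), ∀ S : ℝ, S0 ≤ S → ∃ P > (0:ℝ),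
      ∀ ε : ℝ, 0 < ε → ε ≤ 1 →
        ∃ (α : ℝ → Euc k) (ξ : ℝ → Euc N) (η : ℝ → Euc M),
          IsControl A α ∧ IsTrajectory f g ε α ξ η ∧ ξ 0 = x ∧ η 0 = y ∧
          ‖η S - z‖ ≤ P * ε := by
  intro x y z
  lift L0 to NNReal using hL0.le
  lift Q0 to NNReal using hQ0.le
  obtain ⟨S₀, hS₀, h⟩ := statement5_general
    (fun a ha => lipschitzWith_uncurry_of_norm_sub_le_s5 fun x₁ x₂ y₁ y₂ => hfLip x₁ x₂ y₁ y₂ a ha)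
    (fun a ha => lipschitzWith_uncurry_of_norm_sub_le_s5 fun x₁ x₂ y₁ y₂ => hgLip x₁ x₂ y₁ y₂ a ha)
    hfBdd hctrl x y z
  refine ⟨S₀, hS₀, fun S hS => ?_⟩
  obtain ⟨P, hP, h_reach⟩ := h S hS
  refine ⟨P, hP, fun ε hε _ => ?_⟩
  obtain ⟨α, ξ, η, hα, h_traj⟩ := h_reach ε hε
  exact ⟨α, ξ, η, ⟨α.measurable, hα⟩, h_traj⟩
end
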